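/- arXiv:1806.04901 — 2 statements merged into one kernel-verified Lean document; each statement's English description precedes it below -/
import Mathlib

section
/- Let N ≥ 2, let Ω ⊆ ℝ^N be a domain with 0 ∈ Ω, and let u be a nonnegative Lipschitz function with compact support contained in Ω which is H⁰-radially decreasing, i.e. u(x) = U(H⁰(x)) for a nonincreasing function U : [0, ∞) → [0, ∞). Then equality holds in the case p = 1 of the anisotropic Hardy inequality: (N−1) · ∫_Ω u(x) / H⁰(x) dx = ∫_Ω |(x/H⁰(x)) · ∇u(x)| dx. In particular, the infimum H_1(Ω) = N−1 of the quotient ∫_Ω |(x/H⁰(x)) · ∇u|dx / ∫_Ω |u|/H⁰(x) dx is attained by every such nonzero u. -/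
/-!
Along a dilation of `ℝ^n`, a weight `w` which is positively homogeneous of degree `d` satisfies
`∫ w(x) u(t x) dx = t ^ (-(n + d)) ∫ w u` for `t > 0`. Differentiating at `t = 1` gives Euler's
identity `∫ w(x) ∇u(x) · x dx = -(n + d) ∫ w u`; the derivative may be taken under the integral
because a Lipschitz `u` is differentiable almost everywhere (Rademacher) and its difference
quotients along rays are dominated by `|w(x)| ‖x‖` on a ball. If `u` is nonincreasing along rays,
then `∇u(x) · x ≤ 0`, so that the left-hand side is `-∫ w(x) |∇u(x) · x| dx`.

The Hardy case is `w = 1 / H⁰`, of degree `-1`. It is bounded by a multiple of `1 / ‖x‖`, which is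
locally integrable exactly when `n ≥ 2`.
-/

open MeasureTheory Set Filter
open scoped RealInnerProductSpace Topology ENNReal NNReal

noncomputable section

/-- `ℝ^N` as a Euclidean space. -/
abbrev Euc (N : ℕ) := EuclideanSpace ℝ (Fin N)

/-- `H : ℝ^N → ℝ` is a Finsler norm: nonnegative, convex, `C²` away from the origin,
even and positively one-homogeneous, comparable to the Euclidean norm, and with
positive definite Hessian of `H²` away from the origin. -/
structure IsFinslerNorm {N : ℕ} (H : Euc N → ℝ) : Prop where
  nonneg : ∀ ξ, 0 ≤ H ξ
  convexOn : ConvexOn ℝ Set.univ H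
  smooth : ContDiffOn ℝ 2 H {(0 : Euc N)}ᶜ
  homog : ∀ (t : ℝ) (ξ : Euc N), H (t • ξ) = |t| * H ξ
  bounds : ∃ a b : ℝ, 0 < a ∧ a ≤ b ∧ ∀ ξ : Euc N, a * ‖ξ‖ ≤ H ξ ∧ H ξ ≤ b * ‖ξ‖
  hessPosDef : ∀ ξ : Euc N, ξ ≠ 0 → ∀ v : Euc N, v ≠ 0 →
    0 < iteratedFDeriv ℝ 2 (fun x => (H x) ^ 2) ξ ![v, v]

/-- The polar function `H⁰(x) = sup_{ξ ≠ 0} (ξ·x)/H(ξ)` of a Finsler norm. -/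
def polarNorm {N : ℕ} (H : Euc N → ℝ) (x : Euc N) : ℝ :=
  sSup {r : ℝ | ∃ ξ : Euc N, ξ ≠ 0 ∧ r = ⟪ξ, x⟫ / H ξ}

/-- `u ∈ C_c^∞(Ω)`: a smooth function with compact support contained in `Ω`. -/
def IsTestFun {N : ℕ} (Ω : Set (Euc N)) (u : Euc N → ℝ) : Prop :=
  ContDiff ℝ (⊤ : ℕ∞) u ∧ HasCompactSupport u ∧ tsupport u ⊆ Ω

open Module (finrank)

section Homogeneous

variable {E F : Type*} [NormedAddCommGroup E] [NormedSpace ℝ E]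
  [NormedAddCommGroup F] [NormedSpace ℝ F] {f w : E → ℝ} {d : ℝ}

/-- Positive homogeneity of real degree `d`: that of `H⁰` for `d = 1`, of the weight `1 / H⁰` for
`d = -1`. At `x = 0` it forces `f 0 = 0` when `d ≠ 0`, in accordance with `0⁻¹ = 0`. -/
def IsPosHomogeneous (d : ℝ) (f : E → ℝ) : Prop :=
  ∀ ⦃t : ℝ⦄, 0 < t → ∀ x, f (t • x) = t ^ d * f x

lemma IsPosHomogeneous.inv (hf : IsPosHomogeneous d f) :
    IsPosHomogeneous (-d) fun x => (f x)⁻¹ := fun t ht x => by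
  simp only [hf ht, mul_inv, Real.rpow_neg ht.le]

lemma IsPosHomogeneous.integral_smul_comp_smul [MeasurableSpace E] [BorelSpace E]
    [FiniteDimensional ℝ E] {μ : Measure E} [μ.IsAddHaarMeasure] (hw : IsPosHomogeneous d w)
    (u : E → F) {t : ℝ} (ht : 0 < t) :
    ∫ x, w x • u (t • x) ∂μ = t ^ (-(finrank ℝ E + d)) • ∫ x, w x • u x ∂μ := by
  have hscale (x : E) : w x • u (t • x) = t ^ (-d) • (w (t • x) • u (t • x)) := by
    rw [hw ht, smul_smul, ← mul_assoc, ← Real.rpow_add ht, neg_add_cancel, Real.rpow_zero, one_mul]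
  calc ∫ x, w x • u (t • x) ∂μ
      = t ^ (-d) • ∫ x, w (t • x) • u (t • x) ∂μ := by simp only [hscale, integral_smul]
    _ = t ^ (-d) • |(t ^ finrank ℝ E)⁻¹| • ∫ x, w x • u x ∂μ := by
        rw [Measure.integral_comp_smul μ fun x => w x • u x]
    _ = t ^ (-(finrank ℝ E + d)) • ∫ x, w x • u x ∂μ := by
        rw [abs_of_pos (by positivity), smul_smul, ← Real.rpow_natCast, ← Real.rpow_neg ht.le,
          ← Real.rpow_add ht, neg_add_rev]

end Homogeneous

section Dilation

lemma exists_forall_comp_smul_eq_zero {E β : Type*} [NormedAddCommGroup E]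
    [NormedSpace ℝ E] [Zero β] {u : E → β} (hu : HasCompactSupport u) {ε : ℝ} (hε : 0 < ε) :
    ∃ R, ∀ x ∉ Metric.closedBall (0 : E) R, ∀ t, ε ≤ t → u (t • x) = 0 := by
  obtain ⟨R, hR⟩ := hu.isCompact.isBounded.subset_closedBall (0 : E)
  refine ⟨R / ε, fun x hx t ht => image_eq_zero_of_notMem_tsupport fun hmem => hx ?_⟩
  have htx : ‖t • x‖ ≤ R := mem_closedBall_zero_iff.1 (hR hmem)
  rw [mem_closedBall_zero_iff, le_div_iff₀' hε]
  calc ε * ‖x‖ ≤ |t| * ‖x‖ := by gcongr; exact ht.trans (le_abs_self t)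
    _ ≤ R := by rwa [norm_smul] at htx

variable {E F : Type*} [NormedAddCommGroup E] [NormedSpace ℝ E]
  [NormedAddCommGroup F] [NormedSpace ℝ F] {w : E → ℝ} {u : E → F} {K : ℝ≥0} {d : ℝ}

lemma hasDerivAt_comp_smul_one {x : E} (hu : DifferentiableAt ℝ u x) :
    HasDerivAt (fun t : ℝ => u (t • x)) (fderiv ℝ u x x) 1 := by
  have hray : HasDerivAt (fun t : ℝ => t • x) x 1 := by
    simpa using (hasDerivAt_id (1 : ℝ)).smul_const x
  exact hu.hasFDerivAt.comp_hasDerivAt_of_eq 1 hray (one_smul ℝ x).symm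

lemma lipschitzWith_smul_comp_smul (hu : LipschitzWith K u) (c : ℝ) (x : E) :
    LipschitzWith (Real.nnabs (‖c‖ * (K * ‖x‖))) fun t : ℝ => c • u (t • x) := by
  refine LipschitzWith.of_dist_le_mul fun t s => ?_
  rw [Real.coe_nnabs, abs_of_nonneg (by positivity), dist_smul₀, mul_assoc]
  gcongr
  calc dist (u (t • x)) (u (s • x)) ≤ K * dist (t • x) (s • x) := hu.dist_le_mul _ _
    _ = K * ‖x‖ * dist t s := by
        rw [dist_eq_norm, ← sub_smul, norm_smul, ← dist_eq_norm]; ring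

variable [MeasurableSpace E] [BorelSpace E] [FiniteDimensional ℝ E] [FiniteDimensional ℝ F]
  {μ : Measure E}

lemma aestronglyMeasurable_smul_fderiv_apply_self (hw : AEStronglyMeasurable w μ) (u : E → F) :
    AEStronglyMeasurable (fun x => w x • fderiv ℝ u x x) μ := by
  have : CompleteSpace F := FiniteDimensional.complete ℝ F
  have : ProperSpace (E →L[ℝ] F) := FiniteDimensional.proper ℝ _
  have hfderiv : AEStronglyMeasurable (fderiv ℝ u) μ :=
    (measurable_fderiv ℝ u).aestronglyMeasurable
  exact hw.smul (isBoundedBilinearMap_apply.continuous.comp_aestronglyMeasurable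
    (hfderiv.prodMk aestronglyMeasurable_id))

variable [μ.IsAddHaarMeasure]

lemma hasDerivAt_integral_smul_comp_smul (hw : LocallyIntegrable w μ) (hu : LipschitzWith K u)
    (hcs : HasCompactSupport u) :
    HasDerivAt (fun t : ℝ => ∫ x, w x • u (t • x) ∂μ) (∫ x, w x • fderiv ℝ u x x ∂μ) 1 := by
  obtain ⟨R, hR⟩ := exists_forall_comp_smul_eq_zero hcs (one_half_pos (α := ℝ))
  let bound := (Metric.closedBall (0 : E) R).indicator fun x => ‖w x‖ * (K * ‖x‖)
  have hbound : Integrable bound μ := by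
    refine IntegrableOn.integrable_indicator ?_ Metric.isClosed_closedBall.measurableSet
    exact IntegrableOn.mul_continuousOn (hw.integrableOn_isCompact (isCompact_closedBall _ _)).norm
      (by fun_prop) (isCompact_closedBall _ _)
  have hlip (x : E) : LipschitzOnWith (Real.nnabs (bound x)) (fun t : ℝ => w x • u (t • x))
      (Ici (1 / 2)) := by
    by_cases hx : x ∈ Metric.closedBall (0 : E) R
    · simpa only [bound, indicator_of_mem hx] using
        (lipschitzWith_smul_comp_smul hu (w x) x).lipschitzOnWith
    · refine LipschitzOnWith.of_dist_le_mul fun t ht s hs => ?_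
      rw [hR x hx t ht, hR x hx s hs, dist_self]
      positivity
  refine (hasDerivAt_integral_of_dominated_loc_of_lip (Ici_mem_nhds (by norm_num))
    (Eventually.of_forall fun t => ?_) ?_
    (aestronglyMeasurable_smul_fderiv_apply_self hw.aestronglyMeasurable u)
    (ae_of_all μ hlip) hbound ?_).2
  · exact hw.aestronglyMeasurable.smul
      (hu.continuous.comp (continuous_const_smul t)).aestronglyMeasurable
  · simpa only [one_smul] using hw.integrable_smul_right_of_hasCompactSupport hu.continuous hcs
  · filter_upwards [hu.ae_differentiableAt (μ := μ)] with x hx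
    exact (hasDerivAt_comp_smul_one hx).const_smul (w x)

theorem integral_smul_fderiv_apply_self (hw : LocallyIntegrable w μ) (hhom : IsPosHomogeneous d w)
    (hu : LipschitzWith K u) (hcs : HasCompactSupport u) :
    ∫ x, w x • fderiv ℝ u x x ∂μ = -(finrank ℝ E + d) • ∫ x, w x • u x ∂μ := by
  have hpow : HasDerivAt (fun t : ℝ => t ^ (-(finrank ℝ E + d)) • ∫ x, w x • u x ∂μ)
      (-(finrank ℝ E + d) • ∫ x, w x • u x ∂μ) 1 := by
    simpa using (Real.hasDerivAt_rpow_const (p := -(finrank ℝ E + d))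
      (Or.inl one_ne_zero)).smul_const (∫ x, w x • u x ∂μ)
  refine (hasDerivAt_integral_smul_comp_smul hw hu hcs).unique (hpow.congr_of_eventuallyEq ?_)
  filter_upwards [Ioi_mem_nhds one_pos] with t ht
  exact hhom.integral_smul_comp_smul u ht

end Dilation

section Rays

lemma integral_mul_pos_of_continuous {X : Type*} [TopologicalSpace X] [T2Space X]
    [MeasurableSpace X] [OpensMeasurableSpace X] {μ : Measure X} [μ.IsOpenPosMeasure]
    {w u : X → ℝ} (hw : LocallyIntegrable w μ) (hpos : ∀ᵐ x ∂μ, 0 < w x) (hu : Continuous u)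
    (hcs : HasCompactSupport u) (hnn : ∀ x, 0 ≤ u x) (hne : u ≠ 0) :
    0 < ∫ x, w x * u x ∂μ := by
  have hint : Integrable (fun x => w x * u x) μ :=
    hw.integrable_smul_right_of_hasCompactSupport hu hcs
  have hnonneg : 0 ≤ᵐ[μ] fun x => w x * u x := by
    filter_upwards [hpos] with x hx
    exact mul_nonneg hx.le (hnn x)
  have hsupp : Function.support u ≤ᵐ[μ] Function.support fun x => w x * u x := by
    filter_upwards [hpos] with x hx hux
    exact mul_ne_zero hx.ne' hux
  rw [integral_pos_iff_support_of_nonneg_ae hnonneg hint]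
  exact (hu.isOpen_support.measure_pos μ (Function.support_nonempty_iff.2 hne)).trans_le
    (measure_mono_ae hsupp)

variable {E : Type*} [NormedAddCommGroup E] [NormedSpace ℝ E] {w u : E → ℝ} {d : ℝ}

/-- `u` is nonincreasing along every open ray from the origin, as is every `H⁰`-radially decreasing
function; this is what gives `∇u(x) · x` its sign. -/
def AntitoneOnRays (u : E → ℝ) : Prop :=
  ∀ x, AntitoneOn (fun t : ℝ => u (t • x)) (Ioi 0)

lemma IsPosHomogeneous.antitoneOnRays_comp {g : E → ℝ} {U : ℝ → ℝ} (hg : IsPosHomogeneous d g)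
    (hd : 0 ≤ d) (hg0 : ∀ x, 0 ≤ g x) (hU : AntitoneOn U (Ici 0)) :
    AntitoneOnRays fun x => U (g x) := fun x s hs t ht hst => by
  refine hU (hg0 _) (hg0 _) ?_
  rw [hg hs, hg ht]
  gcongr
  exacts [hg0 x, le_of_lt hs]

lemma AntitoneOnRays.fderiv_apply_self_nonpos (hu : AntitoneOnRays u) (x : E) :
    fderiv ℝ u x x ≤ 0 := by
  by_cases hd : DifferentiableAt ℝ u x
  · have hderiv := (hu x).derivWithin_nonpos (x := 1)
    rwa [derivWithin_of_isOpen isOpen_Ioi (mem_Ioi.2 one_pos),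
      (hasDerivAt_comp_smul_one hd).deriv] at hderiv
  · rw [fderiv_zero_of_not_differentiableAt hd, zero_apply]

variable [MeasurableSpace E] [BorelSpace E] [FiniteDimensional ℝ E] {μ : Measure E}
  [μ.IsAddHaarMeasure] {K : ℝ≥0}

theorem AntitoneOnRays.integral_mul_abs_fderiv_apply_self (hray : AntitoneOnRays u)
    (hw : LocallyIntegrable w μ) (hhom : IsPosHomogeneous d w) (hu : LipschitzWith K u)
    (hcs : HasCompactSupport u) :
    ∫ x, w x * |fderiv ℝ u x x| ∂μ = (finrank ℝ E + d) * ∫ x, w x * u x ∂μ := by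
  have hEuler := integral_smul_fderiv_apply_self hw hhom hu hcs
  simp only [smul_eq_mul] at hEuler
  simp only [abs_of_nonpos (hray.fderiv_apply_self_nonpos _), mul_neg, integral_neg, hEuler,
    neg_mul, neg_neg]

theorem finsler_hardy_L1_attained_general {Ω : Set E} (hw : LocallyIntegrable w μ)
    (hpos : ∀ᵐ x ∂μ, 0 < w x) (hhom : IsPosHomogeneous d w) (hu : LipschitzWith K u)
    (hcs : HasCompactSupport u) (hsupp : tsupport u ⊆ Ω) (hnn : ∀ x, 0 ≤ u x)
    (hray : AntitoneOnRays u) :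
    (finrank ℝ E + d) * ∫ x in Ω, w x * u x ∂μ = ∫ x in Ω, w x * |fderiv ℝ u x x| ∂μ ∧
    (u ≠ 0 →
      (∫ x in Ω, w x * |fderiv ℝ u x x| ∂μ) / ∫ x in Ω, w x * |u x| ∂μ = finrank ℝ E + d) := by
  have hΩ : ∫ x in Ω, w x * u x ∂μ = ∫ x, w x * u x ∂μ :=
    setIntegral_eq_integral_of_forall_compl_eq_zero fun x hx => by
      rw [image_eq_zero_of_notMem_tsupport fun h => hx (hsupp h), mul_zero]
  have hΩ' : ∫ x in Ω, w x * |fderiv ℝ u x x| ∂μ = ∫ x, w x * |fderiv ℝ u x x| ∂μ :=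
    setIntegral_eq_integral_of_forall_compl_eq_zero fun x hx => by
      rw [fderiv_of_notMem_tsupport ℝ fun h => hx (hsupp h), zero_apply, abs_zero, mul_zero]
  simp only [abs_of_nonneg (hnn _), hΩ, hΩ',
    hray.integral_mul_abs_fderiv_apply_self hw hhom hu hcs, true_and]
  intro hne
  exact mul_div_cancel_right₀ _
    (integral_mul_pos_of_continuous hw hpos hu.continuous hcs hnn hne).ne'

end Rays

section NormBound

variable {E : Type*} [NormedAddCommGroup E] [MeasurableSpace E] {μ : Measure E} {g : E → ℝ} {c : ℝ}

lemma ae_pos_of_mul_norm_le [NullSingletonClass μ] (hc : 0 < c) (hcg : ∀ x, c * ‖x‖ ≤ g x) :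
    ∀ᵐ x ∂μ, 0 < g x := by
  filter_upwards [Measure.ae_ne μ 0] with x hx
  exact (by positivity : 0 < c * ‖x‖).trans_le (hcg x)

lemma locallyIntegrable_inv_of_mul_norm_le [NormedSpace ℝ E] [BorelSpace E]
    [FiniteDimensional ℝ E] [μ.IsAddHaarMeasure] (hE : 1 < finrank ℝ E)
    (hg : AEStronglyMeasurable g μ) (hc : 0 < c) (hcg : ∀ x, c * ‖x‖ ≤ g x) :
    LocallyIntegrable (fun x => (g x)⁻¹) μ := by
  have : Nontrivial E := Module.nontrivial_of_finrank_pos (R := ℝ) (by lia)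
  refine locallyIntegrable_of_norm_le_rpow (C := c⁻¹) (α := 1) hE.le (by exact_mod_cast hE) ?_
    hg.aemeasurable.inv.aestronglyMeasurable
  filter_upwards [Measure.ae_ne μ 0] with x hx
  have hpos : 0 < c * ‖x‖ := by positivity
  rw [Real.rpow_neg_one, ← mul_inv, norm_inv, Real.norm_of_nonneg (hpos.le.trans (hcg x))]
  exact inv_anti₀ hpos (hcg x)

end NormBound

section Polar

variable {N : ℕ} {H : Euc N → ℝ} {a b : ℝ}

lemma polarNorm_eq_iSup (H : Euc N → ℝ) (x : Euc N) :
    polarNorm H x = ⨆ ξ : {ξ : Euc N // ξ ≠ 0}, ⟪(ξ : Euc N), x⟫ / H ξ := by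
  refine congrArg sSup (Set.ext fun r => ?_)
  simp only [mem_ofPred_eq, mem_range, Subtype.exists, exists_prop, eq_comm]

lemma isPosHomogeneous_polarNorm (H : Euc N → ℝ) : IsPosHomogeneous 1 (polarNorm H) :=
  fun t ht x => by
    simp only [polarNorm_eq_iSup, Real.rpow_one, Real.mul_iSup_of_nonneg ht.le,
      real_inner_smul_right, mul_div_assoc]

lemma polarNorm_nonneg (hH : ∀ ξ, 0 ≤ H ξ) (x : Euc N) : 0 ≤ polarNorm H x := by
  rw [polarNorm_eq_iSup]
  rcases eq_or_ne x 0 with rfl | hx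
  · simp
  · exact Real.iSup_nonneg' ⟨⟨x, hx⟩, div_nonneg real_inner_self_nonneg (hH x)⟩

lemma bddAbove_range_inner_div (ha : 0 < a) (haH : ∀ ξ, a * ‖ξ‖ ≤ H ξ) (x : Euc N) :
    BddAbove (range fun ξ : {ξ : Euc N // ξ ≠ 0} => ⟪(ξ : Euc N), x⟫ / H ξ) := by
  refine ⟨a⁻¹ * ‖x‖, ?_⟩
  rintro _ ⟨⟨ξ, hξ⟩, rfl⟩
  have hHξ : 0 < H ξ := (by positivity : 0 < a * ‖ξ‖).trans_le (haH ξ)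
  rw [div_le_iff₀ hHξ]
  calc ⟪ξ, x⟫ ≤ ‖ξ‖ * ‖x‖ := real_inner_le_norm _ _
    _ = a⁻¹ * ‖x‖ * (a * ‖ξ‖) := by field_simp
    _ ≤ a⁻¹ * ‖x‖ * H ξ := by gcongr; exact haH ξ

lemma lowerSemicontinuous_polarNorm (ha : 0 < a) (haH : ∀ ξ, a * ‖ξ‖ ≤ H ξ) :
    LowerSemicontinuous (polarNorm H) := by
  simp only [funext (polarNorm_eq_iSup H)]
  exact lowerSemicontinuous_ciSup (bddAbove_range_inner_div ha haH) fun ξ =>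
    Continuous.lowerSemicontinuous (by fun_prop)

lemma inv_mul_norm_le_polarNorm (ha : 0 < a) (haH : ∀ ξ, a * ‖ξ‖ ≤ H ξ) (hb : 0 < b)
    (hHb : ∀ ξ, H ξ ≤ b * ‖ξ‖) (x : Euc N) : b⁻¹ * ‖x‖ ≤ polarNorm H x := by
  rw [polarNorm_eq_iSup]
  rcases eq_or_ne x 0 with rfl | hx
  · simp
  have hHx : 0 < H x := (by positivity : 0 < a * ‖x‖).trans_le (haH x)
  calc b⁻¹ * ‖x‖ = ⟪x, x⟫ / (b * ‖x‖) := by rw [real_inner_self_eq_norm_sq]; field_simp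
    _ ≤ ⟪x, x⟫ / H x := by gcongr; exacts [real_inner_self_nonneg, hHb x]
    _ ≤ ⨆ ξ : {ξ : Euc N // ξ ≠ 0}, ⟪(ξ : Euc N), x⟫ / H ξ :=
        le_ciSup (bddAbove_range_inner_div ha haH x) ⟨x, hx⟩

lemma ae_polarNorm_pos (hN : 0 < N) (ha : 0 < a) (haH : ∀ ξ, a * ‖ξ‖ ≤ H ξ) (hb : 0 < b)
    (hHb : ∀ ξ, H ξ ≤ b * ‖ξ‖) : ∀ᵐ x, 0 < polarNorm H x := by
  have : NeZero N := ⟨hN.ne'⟩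
  exact ae_pos_of_mul_norm_le (inv_pos.2 hb) (inv_mul_norm_le_polarNorm ha haH hb hHb)

lemma locallyIntegrable_inv_polarNorm (hN : 1 < N) (ha : 0 < a) (haH : ∀ ξ, a * ‖ξ‖ ≤ H ξ)
    (hb : 0 < b) (hHb : ∀ ξ, H ξ ≤ b * ‖ξ‖) : LocallyIntegrable fun x => (polarNorm H x)⁻¹ :=
  locallyIntegrable_inv_of_mul_norm_le (by rwa [finrank_euclideanSpace_fin])
    (lowerSemicontinuous_polarNorm ha haH).measurable.aestronglyMeasurable (inv_pos.2 hb)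
    (inv_mul_norm_le_polarNorm ha haH hb hHb)

end Polar

lemma abs_inner_smul_gradient {E : Type*} [NormedAddCommGroup E] [InnerProductSpace ℝ E]
    [CompleteSpace E] {c : ℝ} (hc : 0 ≤ c) (u : E → ℝ) (x y : E) :
    |⟪c • y, gradient u x⟫| = c * |fderiv ℝ u x y| := by
  rw [real_inner_smul_left, inner_gradient_right, conj_trivial, abs_mul, abs_of_nonneg hc]

/-- For p = 1 the best Hardy constant N - 1 is attained by every nonnegative
H⁰-radially decreasing Lipschitz function with compact support in Ω. -/
theorem finsler_hardy_L1_attained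
    (N : ℕ) (hN : 2 ≤ N) (H : Euc N → ℝ) (hH : IsFinslerNorm H)
    (Ω : Set (Euc N)) (hΩopen : IsOpen Ω) (hΩconn : IsConnected Ω) (h0 : 0 ∈ Ω)
    (u : Euc N → ℝ) (K : ℝ≥0) (hLip : LipschitzWith K u)
    (hcs : HasCompactSupport u) (hsupp : tsupport u ⊆ Ω)
    (hnn : ∀ x, 0 ≤ u x)
    (U : ℝ → ℝ) (hrad : ∀ x, u x = U (polarNorm H x))
    (hUanti : AntitoneOn U (Ici 0)) (hUnn : ∀ r ∈ Ici (0 : ℝ), 0 ≤ U r) :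
    ((N : ℝ) - 1) * ∫ x in Ω, u x / polarNorm H x
      = ∫ x in Ω, |⟪(polarNorm H x)⁻¹ • x, gradient u x⟫| ∧
    (u ≠ 0 →
      (∫ x in Ω, |⟪(polarNorm H x)⁻¹ • x, gradient u x⟫|) /
          (∫ x in Ω, |u x| / polarNorm H x) = (N : ℝ) - 1) := by
  obtain ⟨a, b, ha, hab, hbounds⟩ := hH.bounds
  obtain ⟨haH, hHb⟩ := forall_and.1 hbounds
  have hb : 0 < b := ha.trans_le hab
  have hloc := locallyIntegrable_inv_polarNorm hN ha haH hb hHb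
  have hpos : ∀ᵐ x, 0 < (polarNorm H x)⁻¹ :=
    (ae_polarNorm_pos (by lia) ha haH hb hHb).mono fun _ => inv_pos.2
  have hhom := isPosHomogeneous_polarNorm H
  have hnonneg := polarNorm_nonneg hH.nonneg
  have hray : AntitoneOnRays u :=
    funext hrad ▸ hhom.antitoneOnRays_comp zero_le_one hnonneg hUanti
  simpa only [abs_inner_smul_gradient (inv_nonneg.2 (hnonneg _)), div_eq_inv_mul,
    finrank_euclideanSpace_fin, ← sub_eq_add_neg]
    using finsler_hardy_L1_attained_general hloc hpos hhom.inv hLip hcs hsupp hnn hray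
end
end

section
/- Let N ≥ 2 and let Ω ⊂ ℝ^N be a bounded domain with 0 ∈ Ω; set R = sup_{x ∈ Ω} H⁰(x). Then H_N(Ω) := inf over nonzero u ∈ C_c^∞(Ω) of [ ∫_Ω |(x/H⁰(x)) · ∇u(x)|^N dx / ∫_Ω |u(x)|^N / ( H⁰(x)^N (log(R/H⁰(x)))^N ) dx ] equals ((N−1)/N)^N, and the infimum is not attained: for every nonzero u ∈ C_c^∞(Ω) the quotient is strictly greater than ((N−1)/N)^N. -/
/-!
In the logarithmic polar coordinates `x = R e^{-s} ω / p(ω)`, where `p` is the polar norm, the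
measure `dx / p(x)^N` becomes `ds` times a measure on the unit sphere, `log (R / p(x))` becomes
`s`, and `x · ∇u` becomes `-d/ds`. The inequality is thus Hardy's inequality
`(N - 1)^N / N^N ∫ |F / s|^N ≤ ∫ |F'|^N` on the half-line `s > 0`, for each restriction `F` of `u`
to a ray.

With `β = ((N - 1) / N) |F| / s`, Young's inequality bounds `|F'|^N - β^N` below by the derivative
of `((N - 1) / N)^(N - 1) |F|^N / s^(N - 1)` plus a remainder vanishing only where `|F'| = β`. If
equality held for some `u`, then `|F'| = β` on every ray, and Grönwall's inequality started from the
region where `F = 0` would give `u = 0`.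

For sharpness, take `u(x) = F(log (R / q(x)))`, where `q ≤ p` is a multiple of a Euclidean norm, so
that `u` is smooth. The Emden substitution `F(s) = s^{(N - 1) / N} G(log s)` turns the
one-dimensional quotient into `∫ |(N - 1) / N G + G'|^N / ∫ |G|^N`, which tends to
`((N - 1) / N)^N` as `G` is spread out.
-/

open MeasureTheory Set Filter
open scoped RealInnerProductSpace Topology ENNReal NNReal

noncomputable section

/-! ### Gauges -/

section Gauge

/-- A gauge on `E`: a continuous function, positive away from the origin and homogeneous of degree
one under positive dilations, i.e. the Minkowski functional of a bounded star-shaped neighbourhood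
of the origin. Neither symmetry nor convexity is required. -/
structure IsGauge {E : Type*} [NormedAddCommGroup E] [NormedSpace ℝ E] (p : E → ℝ) : Prop where
  continuous : Continuous p
  map_smul_of_pos : ∀ ⦃t : ℝ⦄ (x : E), 0 < t → p (t • x) = t * p x
  pos : ∀ ⦃x : E⦄, x ≠ 0 → 0 < p x

lemma isGauge_polarNorm {N : ℕ} {H : Euc N → ℝ} (hH : ∃ a > 0, ∀ ξ, a * ‖ξ‖ ≤ H ξ) :
    IsGauge (polarNorm H) := by
  obtain ⟨a, ha, hH⟩ := hH
  have H_pos {ξ : Euc N} (hξ : ξ ≠ 0) : 0 < H ξ := (by positivity : 0 < a * ‖ξ‖).trans_le (hH ξ)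
  have ratio_le (x ξ : Euc N) (hξ : ξ ≠ 0) : ⟪ξ, x⟫ / H ξ ≤ a⁻¹ * ‖x‖ := by
    rw [div_le_iff₀ (H_pos hξ)]
    calc ⟪ξ, x⟫ ≤ ‖ξ‖ * ‖x‖ := real_inner_le_norm ξ x
      _ = a⁻¹ * ‖x‖ * (a * ‖ξ‖) := by field_simp
      _ ≤ a⁻¹ * ‖x‖ * H ξ := by gcongr; exact hH ξ
  have ratio_le_polar (x ξ : Euc N) (hξ : ξ ≠ 0) : ⟪ξ, x⟫ / H ξ ≤ polarNorm H x := by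
    refine le_csSup ⟨a⁻¹ * ‖x‖, ?_⟩ ⟨ξ, hξ, rfl⟩
    rintro _ ⟨η, hη, rfl⟩
    exact ratio_le x η hη
  have polar_pos {x : Euc N} (hx : x ≠ 0) : 0 < polarNorm H x :=
    (div_pos (real_inner_self_pos.2 hx) (H_pos hx)).trans_le (ratio_le_polar x x hx)
  have polar_nonneg (x : Euc N) : 0 ≤ polarNorm H x := by
    rcases eq_or_ne x 0 with rfl | hx
    · refine Real.sSup_nonneg ?_
      rintro _ ⟨ξ, -, rfl⟩
      simp
    · exact (polar_pos hx).le
  refine ⟨(LipschitzWith.of_le_add_mul a⁻¹.toNNReal fun x y ↦ ?_).continuous,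
    fun t x ht ↦ ?_, @polar_pos⟩
  · refine Real.sSup_le ?_ (add_nonneg (polar_nonneg y) (mul_nonneg (by positivity) dist_nonneg))
    rintro _ ⟨ξ, hξ, rfl⟩
    calc ⟪ξ, x⟫ / H ξ = ⟪ξ, y⟫ / H ξ + ⟪ξ, x - y⟫ / H ξ := by rw [inner_sub_right]; ring
      _ ≤ polarNorm H y + a⁻¹ * ‖x - y‖ := add_le_add (ratio_le_polar y ξ hξ) (ratio_le _ ξ hξ)
      _ = _ := by rw [dist_eq_norm, Real.coe_toNNReal _ (by positivity)]
  · rw [polarNorm, polarNorm, ← smul_eq_mul, ← Real.sSup_smul_of_nonneg ht.le]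
    congr 1
    ext r
    simp only [mem_ofPred_eq, mem_smul_set, real_inner_smul_right, mul_div_assoc, smul_eq_mul]
    aesop

variable {E : Type*} [NormedAddCommGroup E] [NormedSpace ℝ E] {p : E → ℝ}

namespace IsGauge

lemma map_zero (hp : IsGauge p) : p 0 = 0 := by
  have h := hp.map_smul_of_pos 0 two_pos
  rw [smul_zero] at h
  linarith

lemma nonneg (hp : IsGauge p) (x : E) : 0 ≤ p x := by
  rcases eq_or_ne x 0 with rfl | hx
  · exact hp.map_zero.ge
  · exact (hp.pos hx).le

lemma map_smul_of_nonneg (hp : IsGauge p) {t : ℝ} (ht : 0 ≤ t) (x : E) : p (t • x) = t * p x := by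
  rcases ht.eq_or_lt with rfl | ht
  · simp [hp.map_zero]
  · exact hp.map_smul_of_pos x ht

lemma exists_mul_norm_le [FiniteDimensional ℝ E] (hp : IsGauge p) :
    ∃ c > 0, ∀ x, c * ‖x‖ ≤ p x := by
  rcases (Metric.sphere (0 : E) 1).eq_empty_or_nonempty with hempty | hne
  · have : Subsingleton E := not_nontrivial_iff_subsingleton.1 fun _ ↦
      (NormedSpace.sphere_nonempty.2 zero_le_one).ne_empty hempty
    exact ⟨1, one_pos, fun x ↦ by simp [Subsingleton.elim x 0, hp.map_zero]⟩
  obtain ⟨ω, hω, hmin⟩ := (isCompact_sphere (0 : E) 1).exists_isMinOn hne hp.continuous.continuousOn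
  refine ⟨p ω, hp.pos (ne_zero_of_mem_unit_sphere ⟨ω, hω⟩), fun x ↦ ?_⟩
  rcases eq_or_ne x 0 with rfl | hx
  · simp [hp.map_zero]
  have hle : p ω ≤ p (‖x‖⁻¹ • x) := hmin (by simp [norm_smul, hx])
  rw [hp.map_smul_of_pos x (by positivity)] at hle
  calc p ω * ‖x‖ ≤ ‖x‖⁻¹ * p x * ‖x‖ := by gcongr
    _ = p x := by field_simp

lemma exists_smooth_le [FiniteDimensional ℝ E] (hp : IsGauge p) :
    ∃ q : E → ℝ, IsGauge q ∧ (∀ x ≠ 0, ContDiffAt ℝ (⊤ : ℕ∞) q x) ∧ ∀ x, q x ≤ p x := by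
  obtain ⟨c, hc, hle⟩ := hp.exists_mul_norm_le
  let T : E →L[ℝ] EuclideanSpace ℝ (Fin (Module.finrank ℝ E)) := (toEuclidean (E := E) : E →L[ℝ] _)
  have hT {x : E} (hx : x ≠ 0) : T x ≠ 0 := by simpa [T] using hx
  refine ⟨fun x ↦ c / (‖T‖ + 1) * ‖T x‖, ⟨by fun_prop, fun t x ht ↦ ?_, fun x hx ↦ ?_⟩,
    fun x hx ↦ ?_, fun x ↦ ?_⟩
  · rw [map_smul, norm_smul, Real.norm_of_nonneg ht.le, mul_left_comm]
  · have := norm_pos_iff.2 (hT hx)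
    positivity
  · exact contDiffAt_const.mul ((contDiffAt_norm ℝ (hT hx)).comp x T.contDiff.contDiffAt)
  · calc c / (‖T‖ + 1) * ‖T x‖ ≤ c / (‖T‖ + 1) * ((‖T‖ + 1) * ‖x‖) := by
          gcongr
          exact (T.le_opNorm x).trans (by gcongr; linarith)
      _ = c * ‖x‖ := by field_simp
      _ ≤ p x := hle x

lemma isCompact_setOf_le [FiniteDimensional ℝ E] (hp : IsGauge p) (r : ℝ) :
    IsCompact {x | p x ≤ r} := by
  obtain ⟨c, hc, hle⟩ := hp.exists_mul_norm_le
  refine (isCompact_closedBall (0 : E) (r / c)).of_isClosed_subset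
    (isClosed_le hp.continuous continuous_const) fun x (hx : p x ≤ r) ↦ ?_
  rw [mem_closedBall_zero_iff, le_div_iff₀' hc]
  exact (hle x).trans hx

lemma hasCompactSupport [FiniteDimensional ℝ E] (hp : IsGauge p) {u : E → ℝ} {r : ℝ}
    (h0 : ∀ x, r ≤ p x → u x = 0) : HasCompactSupport u :=
  .intro (hp.isCompact_setOf_le r) fun x hx ↦ h0 x (not_le.1 hx).le

lemma exists_setOf_le_subset [FiniteDimensional ℝ E] (hp : IsGauge p) {s : Set E}
    (hs : s ∈ 𝓝 0) : ∃ r > 0, {x | p x ≤ r} ⊆ s := by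
  obtain ⟨c, hc, hle⟩ := hp.exists_mul_norm_le
  obtain ⟨ε, hε, hball⟩ := Metric.nhds_basis_closedBall.mem_iff.1 hs
  refine ⟨c * ε, by positivity, fun x (hx : p x ≤ c * ε) ↦ hball ?_⟩
  exact mem_closedBall_zero_iff.2 (le_of_mul_le_mul_left ((hle x).trans hx) hc)

lemma lt_sSup_image [Nontrivial E] [FiniteDimensional ℝ E] (hp : IsGauge p) {Ω : Set E}
    (hΩ : IsOpen Ω) (hbdd : Bornology.IsBounded Ω) {x : E} (hx : x ∈ Ω) : p x < sSup (p '' Ω) := by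
  have hbddAbove : BddAbove (p '' Ω) :=
    (hbdd.isCompact_closure.image hp.continuous).bddAbove.mono (image_mono subset_closure)
  obtain ⟨v, hv, r, hr, rfl⟩ : ∃ v : E, v ≠ 0 ∧ ∃ r : ℝ, 0 ≤ r ∧ r • v = x := by
    rcases eq_or_ne x 0 with rfl | hx0
    · obtain ⟨v, hv⟩ := exists_ne (0 : E)
      exact ⟨v, hv, 0, le_rfl, zero_smul ℝ v⟩
    · exact ⟨x, hx0, 1, zero_le_one, one_smul ℝ x⟩
  have hΩr : ∀ᶠ t in 𝓝[>] r, t • v ∈ Ω :=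
    nhdsWithin_le_nhds ((by fun_prop : Continuous fun t : ℝ ↦ t • v).tendsto r (hΩ.mem_nhds hx))
  obtain ⟨t, htΩ, hrt⟩ := (hΩr.and self_mem_nhdsWithin).exists
  calc p (r • v) = r * p v := hp.map_smul_of_nonneg hr v
    _ < t * p v := mul_lt_mul_of_pos_right hrt (hp.pos hv)
    _ = p (t • v) := (hp.map_smul_of_nonneg (hr.trans hrt.le) v).symm
    _ ≤ sSup (p '' Ω) := le_csSup hbddAbove (mem_image_of_mem p htΩ)

lemma exists_lt_sSup_image_forall_eq_zero [Nontrivial E] [FiniteDimensional ℝ E] (hp : IsGauge p)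
    {Ω : Set E} (hΩ : IsOpen Ω) (hbdd : Bornology.IsBounded Ω) {u : E → ℝ}
    (hu : HasCompactSupport u) (huΩ : tsupport u ⊆ Ω) (hu0 : u ≠ 0) :
    ∃ r, 0 < r ∧ r < sSup (p '' Ω) ∧ ∀ x, r ≤ p x → u x = 0 := by
  obtain ⟨z, hz⟩ := Function.ne_iff.1 hu0
  obtain ⟨y, hy, hmax⟩ := hu.isCompact.exists_isMaxOn ⟨z, subset_tsupport u hz⟩
    hp.continuous.continuousOn
  obtain ⟨r, hyr, hr⟩ := exists_between (hp.lt_sSup_image hΩ hbdd (huΩ hy))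
  refine ⟨r, (hp.nonneg y).trans_lt hyr, hr, fun x hx ↦
    image_eq_zero_of_notMem_tsupport fun hxu ↦ ?_⟩
  exact absurd (hmax hxu) (not_le.2 (hyr.trans_le hx))

end IsGauge

end Gauge

/-! ### Logarithmic polar coordinates -/

section LogPolar

variable {E : Type*} [NormedAddCommGroup E] [NormedSpace ℝ E] {p q : E → ℝ} {R : ℝ}

/-- The point at logarithmic depth `s` on the ray through `ω`, i.e. the point `x` of that ray with
`log (R / p x) = s`. -/
def logRay (p : E → ℝ) (R : ℝ) (ω : E) (s : ℝ) : E := (R * Real.exp (-s) / p ω) • ω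

lemma IsGauge.map_logRay (hp : IsGauge p) (hR : 0 < R) {ω : E} (hω : ω ≠ 0) (s : ℝ) :
    p (logRay p R ω s) = R * Real.exp (-s) := by
  have := hp.pos hω
  rw [logRay, hp.map_smul_of_pos ω (by positivity)]
  field_simp

lemma IsGauge.log_div_map_logRay (hp : IsGauge p) (hq : IsGauge q) (hR : 0 < R) {ω : E}
    (hω : ω ≠ 0) (s : ℝ) :
    Real.log (R / q (logRay p R ω s)) = s + Real.log (p ω / q ω) := by
  have hpω := hp.pos hω
  have hqω := hq.pos hω
  have hquot : R / q (logRay p R ω s) = Real.exp s * (p ω / q ω) := by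
    rw [logRay, hq.map_smul_of_pos ω (by positivity), Real.exp_neg]
    field_simp
  rw [hquot, Real.log_mul (Real.exp_ne_zero s) (by positivity), Real.log_exp]

lemma IsGauge.logRay_log_div (hp : IsGauge p) (hR : 0 < R) {x : E} (hx : x ≠ 0) :
    logRay p R x (Real.log (R / p x)) = x := by
  have := hp.pos hx
  rw [logRay, Real.exp_neg, Real.exp_log (by positivity)]
  field_simp
  exact one_smul ℝ x

lemma IsGauge.logRay_ne_zero (hp : IsGauge p) (hR : 0 < R) {ω : E} (hω : ω ≠ 0) (s : ℝ) :
    logRay p R ω s ≠ 0 := by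
  have := hp.pos hω
  exact smul_ne_zero (ne_of_gt (by positivity)) hω

lemma hasDerivAt_logRay (p : E → ℝ) (R : ℝ) (ω : E) (s : ℝ) :
    HasDerivAt (logRay p R ω) (-logRay p R ω s) s := by
  have h := (((hasDerivAt_neg s).exp.const_mul R).div_const (p ω)).smul_const ω
  exact h.congr_deriv (by rw [logRay, ← neg_smul]; congr 1; ring)

lemma lintegral_Ioi_inv_mul {c : ℝ} (hc : 0 < c) (g : ℝ → ℝ≥0∞) :
    ∫⁻ r in Ioi (0 : ℝ), ENNReal.ofReal r⁻¹ * g r = ∫⁻ s, g (c * Real.exp (-s)) := by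
  have hderiv (s : ℝ) : HasDerivAt (fun s ↦ c * Real.exp (-s)) (-(c * Real.exp (-s))) s := by
    simpa using (hasDerivAt_neg s).exp.const_mul c
  have hrange : (fun s ↦ c * Real.exp (-s)) '' univ = Ioi 0 := by
    refine Subset.antisymm ?_ fun r (hr : 0 < r) ↦ ⟨-Real.log (r / c), mem_univ _, ?_⟩
    · rintro _ ⟨s, -, rfl⟩
      exact mul_pos hc (Real.exp_pos _)
    simp only [neg_neg, Real.exp_log (div_pos hr hc)]
    field_simp
  have hinj : InjOn (fun s ↦ c * Real.exp (-s)) univ := fun s _ t _ h ↦ by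
    simpa [hc.ne'] using h
  rw [← hrange, lintegral_image_eq_lintegral_abs_deriv_mul MeasurableSet.univ
    (fun s _ ↦ (hderiv s).hasDerivWithinAt) hinj, setLIntegral_univ]
  refine lintegral_congr fun s ↦ ?_
  have hpos : 0 < c * Real.exp (-s) := by positivity
  rw [abs_neg, abs_of_pos hpos, ← mul_assoc, ← ENNReal.ofReal_mul hpos.le,
    mul_inv_cancel₀ hpos.ne', ENNReal.ofReal_one, one_mul]

variable [MeasurableSpace E] [BorelSpace E]

lemma lintegral_eq_lintegral_toSphere [FiniteDimensional ℝ E] [Nontrivial E] (μ : Measure E)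
    [μ.IsAddHaarMeasure] {f : E → ℝ≥0∞} (hf : Measurable f) :
    ∫⁻ x, f x ∂μ = ∫⁻ ω, (∫⁻ r in Ioi (0 : ℝ),
      ENNReal.ofReal (r ^ (Module.finrank ℝ E - 1)) * f (r • (ω : E))) ∂μ.toSphere := by
  let g : Metric.sphere (0 : E) 1 × Ioi (0 : ℝ) → ℝ≥0∞ := fun z ↦ f ((z.2 : ℝ) • (z.1 : E))
  have hg : Measurable g := hf.comp <|
    (measurable_subtype_coe.comp measurable_snd).smul (measurable_subtype_coe.comp measurable_fst)
  have hpolar (x : ({0}ᶜ : Set E)) : g (homeomorphUnitSphereProd E x) = f x :=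
    congrArg (fun z : ({0}ᶜ : Set E) ↦ f z) ((homeomorphUnitSphereProd E).symm_apply_apply x)
  calc ∫⁻ x, f x ∂μ = ∫⁻ x : ({0}ᶜ : Set E), f x ∂μ.comap Subtype.val := by
        rw [lintegral_subtype_comap (measurableSet_singleton _).compl, restrict_compl_singleton]
    _ = ∫⁻ z, g z ∂μ.toSphere.prod (Measure.volumeIoiPow (Module.finrank ℝ E - 1)) := by
        simp only [← hpolar, μ.measurePreserving_homeomorphUnitSphereProd.lintegral_comp hg]
    _ = _ := by
        rw [lintegral_prod _ hg.aemeasurable]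
        refine lintegral_congr fun ω ↦ ?_
        rw [Measure.volumeIoiPow, lintegral_withDensity_eq_lintegral_mul _ (by fun_prop)
          (g := fun r ↦ g (ω, r)) (hg.comp measurable_prodMk_left),
          ← lintegral_subtype_comap measurableSet_Ioi]
        rfl

/-- The measure `p ^ (-dim E) μ`, which for a Haar measure `μ` is the scale-invariant measure
`dx / p(x)^N` of the critical Hardy inequality. -/
def gaugeMeasure (μ : Measure E) (p : E → ℝ) : Measure E :=
  μ.withDensity fun x ↦ ENNReal.ofReal (p x ^ Module.finrank ℝ E)⁻¹

/-- The measure induced on the unit sphere by `gaugeMeasure μ p` in polar coordinates. -/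
def gaugeSphereMeasure (μ : Measure E) (p : E → ℝ) : Measure (Metric.sphere (0 : E) 1) :=
  μ.toSphere.withDensity fun ω ↦ ENNReal.ofReal (p ω ^ Module.finrank ℝ E)⁻¹

namespace IsGauge

variable {μ : Measure E}

lemma measurable_ofReal_inv_pow (hp : IsGauge p) :
    Measurable fun x ↦ ENNReal.ofReal (p x ^ Module.finrank ℝ E)⁻¹ := by
  have := hp.continuous.measurable
  fun_prop

lemma lintegral_gaugeMeasure (hp : IsGauge p) (μ : Measure E) {f : E → ℝ≥0∞} (hf : Measurable f) :
    ∫⁻ x, f x ∂gaugeMeasure μ p =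
      ∫⁻ x, ENNReal.ofReal (p x ^ Module.finrank ℝ E)⁻¹ * f x ∂μ :=
  lintegral_withDensity_eq_lintegral_mul _ hp.measurable_ofReal_inv_pow hf

lemma integral_gaugeMeasure (hp : IsGauge p) (μ : Measure E) (f : E → ℝ) :
    ∫ x, f x ∂gaugeMeasure μ p = ∫ x, (p x ^ Module.finrank ℝ E)⁻¹ * f x ∂μ := by
  rw [gaugeMeasure, integral_withDensity_eq_integral_toReal_smul hp.measurable_ofReal_inv_pow
    (Eventually.of_forall fun _ ↦ ENNReal.ofReal_lt_top)]
  refine integral_congr_ae (Eventually.of_forall fun x ↦ ?_)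
  have := hp.nonneg x
  simp only [smul_eq_mul, ENNReal.toReal_ofReal (by positivity : 0 ≤ (p x ^ _)⁻¹)]

lemma integrable_gaugeMeasure_iff (hp : IsGauge p) {f : E → ℝ} :
    Integrable f (gaugeMeasure μ p) ↔
      Integrable (fun x ↦ (p x ^ Module.finrank ℝ E)⁻¹ * f x) μ := by
  rw [gaugeMeasure, integrable_withDensity_iff_integrable_smul' hp.measurable_ofReal_inv_pow
    (Eventually.of_forall fun _ ↦ ENNReal.ofReal_lt_top)]
  refine integrable_congr (Eventually.of_forall fun x ↦ ?_)
  have := hp.nonneg x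
  simp only [smul_eq_mul, ENNReal.toReal_ofReal (by positivity : 0 ≤ (p x ^ _)⁻¹)]

variable [FiniteDimensional ℝ E]

lemma isOpenPosMeasure_gaugeMeasure [Nontrivial E] (hp : IsGauge p) [μ.IsAddHaarMeasure] :
    (gaugeMeasure μ p).IsOpenPosMeasure := by
  refine (withDensity_absolutelyContinuous' hp.measurable_ofReal_inv_pow.aemeasurable
    ?_ : μ ≪ gaugeMeasure μ p).isOpenPosMeasure
  filter_upwards [Measure.ae_ne μ (0 : E)] with x hx
  have := hp.pos hx
  simp only [ne_eq, ENNReal.ofReal_eq_zero, not_le]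
  positivity

lemma lintegral_gaugeMeasure_eq_logRay [Nontrivial E] (hp : IsGauge p) [μ.IsAddHaarMeasure]
    (hR : 0 < R) {f : E → ℝ≥0∞} (hf : Measurable f) :
    ∫⁻ x, f x ∂gaugeMeasure μ p =
      ∫⁻ ω, (∫⁻ s, f (logRay p R (ω : E) s)) ∂gaugeSphereMeasure μ p := by
  have := hp.continuous.measurable
  rw [hp.lintegral_gaugeMeasure μ hf, lintegral_eq_lintegral_toSphere μ (by fun_prop),
    gaugeSphereMeasure, lintegral_withDensity_eq_lintegral_mul_non_measurable _
      (f := fun ω : Metric.sphere (0 : E) 1 ↦ ENNReal.ofReal (p ω ^ Module.finrank ℝ E)⁻¹)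
      (hp.measurable_ofReal_inv_pow.comp measurable_subtype_coe)
      (Eventually.of_forall fun _ ↦ ENNReal.ofReal_lt_top)]
  refine lintegral_congr fun ω ↦ ?_
  have hpω : 0 < p ω := hp.pos (ne_zero_of_mem_unit_sphere ω)
  have hray (s : ℝ) : logRay p R (ω : E) s = (R / p ω * Real.exp (-s)) • (ω : E) := by
    rw [logRay, div_mul_eq_mul_div]
  simp only [Pi.mul_apply, hray]
  rw [← lintegral_Ioi_inv_mul (by positivity) fun r ↦ f (r • (ω : E)),
    ← lintegral_const_mul' _ _ ENNReal.ofReal_ne_top]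
  refine setLIntegral_congr_fun measurableSet_Ioi fun r (hr : 0 < r) ↦ ?_
  simp only [← mul_assoc]
  rw [← ENNReal.ofReal_mul (by positivity), ← ENNReal.ofReal_mul (by positivity),
    hp.map_smul_of_pos _ hr]
  obtain ⟨n, hn⟩ := Nat.exists_eq_add_one.2 (Module.finrank_pos (R := ℝ) (M := E))
  rw [hn, Nat.add_sub_cancel, mul_pow, pow_succ r]
  congr 2
  field_simp

lemma lintegral_gaugeMeasure_comp_log [Nontrivial E] (hp : IsGauge p) (hq : IsGauge q)
    [μ.IsAddHaarMeasure] (hR : 0 < R) {k : ℝ → ℝ≥0∞} (hk : Measurable k) :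
    ∫⁻ x, k (Real.log (R / q x)) ∂gaugeMeasure μ p =
      gaugeSphereMeasure μ p univ * ∫⁻ s, k s := by
  have hf : Measurable fun x ↦ k (Real.log (R / q x)) := by
    have := hq.continuous.measurable
    fun_prop
  rw [hp.lintegral_gaugeMeasure_eq_logRay hR hf, mul_comm, ← lintegral_const]
  refine lintegral_congr fun ω ↦ ?_
  simp only [hp.log_div_map_logRay hq hR (ne_zero_of_mem_unit_sphere ω)]
  exact lintegral_add_right_eq_self k _

lemma integral_gaugeMeasure_comp_log [Nontrivial E] (hp : IsGauge p) (hq : IsGauge q)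
    [μ.IsAddHaarMeasure] (hR : 0 < R) {k : ℝ → ℝ} (hk : Measurable k) (hk0 : ∀ s, 0 ≤ k s) :
    ∫ x, k (Real.log (R / q x)) ∂gaugeMeasure μ p =
      (gaugeSphereMeasure μ p).real univ * ∫ s, k s := by
  have hf : Measurable fun x ↦ k (Real.log (R / q x)) := by
    have := hq.continuous.measurable
    fun_prop
  rw [integral_eq_lintegral_of_nonneg_ae (Eventually.of_forall fun _ ↦ hk0 _)
      hf.aestronglyMeasurable,
    integral_eq_lintegral_of_nonneg_ae (Eventually.of_forall hk0) hk.aestronglyMeasurable,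
    hp.lintegral_gaugeMeasure_comp_log hq hR (k := fun s ↦ ENNReal.ofReal (k s)) (by fun_prop),
    ENNReal.toReal_mul, Measure.real]

end IsGauge

end LogPolar

/-! ### Hardy's inequality on the half-line with Young's remainder -/

section HalfLine

/-- The remainder `α ^ N + (N - 1) β ^ N - N α β ^ (N - 1)` in Young's inequality, with
`N = n + 1`. -/
def youngRemainder (n : ℕ) (α β : ℝ) : ℝ := α ^ (n + 1) + n * β ^ (n + 1) - (n + 1) * α * β ^ n

lemma youngRemainder_succ (n : ℕ) (α β : ℝ) :
    youngRemainder (n + 1) α β = α * youngRemainder n α β + (n + 1) * β ^ n * (α - β) ^ 2 := by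
  simp only [youngRemainder]
  push_cast
  ring

lemma youngRemainder_nonneg (n : ℕ) {α β : ℝ} (hα : 0 ≤ α) (hβ : 0 ≤ β) :
    0 ≤ youngRemainder n α β := by
  induction n with
  | zero => simp [youngRemainder]
  | succ n ih =>
    rw [youngRemainder_succ]
    positivity

lemma eq_of_youngRemainder_eq_zero {n : ℕ} (hn : n ≠ 0) {α β : ℝ} (hα : 0 ≤ α) (hβ : 0 ≤ β)
    (h : youngRemainder n α β = 0) : α = β := by
  obtain ⟨n, rfl⟩ := Nat.exists_eq_succ_of_ne_zero hn
  have hD := youngRemainder_nonneg n hα hβ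
  have hsq : (n + 1) * β ^ n * (α - β) ^ 2 = 0 :=
    ((add_eq_zero_iff_of_nonneg (by positivity) (by positivity)).1
      ((youngRemainder_succ n α β).symm.trans h)).2
  rcases mul_eq_zero.1 hsq with hβn | hαβ
  · have hβ0 : β = 0 := eq_zero_of_pow_eq_zero ((mul_eq_zero.1 hβn).resolve_left (by positivity))
    have hα0 : α ^ (n + 1 + 1) = 0 := by simpa [youngRemainder, hβ0] using h
    rw [hβ0, eq_zero_of_pow_eq_zero hα0]
  · exact sub_eq_zero.1 (eq_zero_of_pow_eq_zero hαβ)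

lemma hasDerivAt_abs_pow_succ {n : ℕ} (hn : n ≠ 0) (x : ℝ) :
    HasDerivAt (fun y : ℝ ↦ |y| ^ (n + 1)) ((n + 1) * |x| ^ (n - 1) * x) x := by
  have hn1 : 1 ≤ n := Nat.one_le_iff_ne_zero.2 hn
  have h := hasDerivAt_abs_rpow x (p := (n + 1 : ℕ)) (by exact_mod_cast Nat.lt_add_of_pos_left hn1)
  simp only [Real.rpow_natCast] at h
  have hexp : ((n + 1 : ℕ) : ℝ) - 2 = (n - 1 : ℕ) := by push_cast [hn1]; ring
  rw [hexp, Real.rpow_natCast] at h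
  exact_mod_cast h

variable {n : ℕ} {F : ℝ → ℝ}

/-- The function `a ^ n |F| ^ (n + 1) / s ^ n`, `a = n / (n + 1)`, whose derivative
is at most `|F'| ^ (n + 1) - β ^ (n + 1) - youngRemainder n |F'| β` with `β = a |F| / s`. -/
def hardyFlux (n : ℕ) (F : ℝ → ℝ) (s : ℝ) : ℝ := (n / (n + 1)) ^ n * (|F s| ^ (n + 1) / s ^ n)

lemma hasDerivAt_hardyFlux (hn : n ≠ 0) {s : ℝ} (hs : 0 < s) (hF : DifferentiableAt ℝ F s) :
    HasDerivAt (hardyFlux n F) ((n / (n + 1)) ^ n * ((n + 1) * |F s| ^ (n - 1) * (F s * deriv F s) /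
      s ^ n - n * |F s| ^ (n + 1) / s ^ (n + 1))) s := by
  refine ((((hasDerivAt_abs_pow_succ hn (F s)).comp s hF.hasDerivAt).div (hasDerivAt_pow n s)
    (by positivity)).const_mul _).congr_deriv ?_
  obtain ⟨n, rfl⟩ := Nat.exists_eq_succ_of_ne_zero hn
  simp only [Nat.succ_eq_add_one, Nat.add_sub_cancel, Function.comp_apply]
  field_simp
  ring

lemma deriv_hardyFlux_le (hn : n ≠ 0) {s : ℝ} (hs : 0 < s) (hF : DifferentiableAt ℝ F s) :
    deriv (hardyFlux n F) s ≤ |deriv F s| ^ (n + 1) - ((n / (n + 1) * |F s| / s) ^ (n + 1) +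
        youngRemainder n |deriv F s| (n / (n + 1) * |F s| / s)) := by
  have hcross : F s * deriv F s ≤ |F s| * |deriv F s| := (le_abs_self _).trans_eq (abs_mul _ _)
  calc deriv (hardyFlux n F) s
      ≤ (n / (n + 1)) ^ n * ((n + 1) * |F s| ^ (n - 1) * (|F s| * |deriv F s|) / s ^ n -
        n * |F s| ^ (n + 1) / s ^ (n + 1)) := by
        rw [(hasDerivAt_hardyFlux hn hs hF).deriv]
        gcongr
    _ = _ := by
        have ha : (n + 1) * (n / (n + 1) : ℝ) = n := by field_simp
        generalize (n / (n + 1) : ℝ) = a at ha ⊢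
        rw [youngRemainder]
        linear_combination (n + 1) * |deriv F s| * a ^ n / s ^ n * pow_sub_one_mul hn |F s| +
          a ^ n * |F s| ^ (n + 1) / s ^ (n + 1) * ha

lemma continuousOn_hardyLower (n : ℕ) (hF : ContDiff ℝ 1 F) :
    ContinuousOn (fun s ↦ (n / (n + 1) * |F s| / s) ^ (n + 1) +
      youngRemainder n |deriv F s| (n / (n + 1) * |F s| / s)) (Ioi 0) := by
  have : Continuous (deriv F) := hF.continuous_deriv_one
  have hβ : ContinuousOn (fun s ↦ n / (n + 1) * |F s| / s) (Ioi 0) :=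
    ContinuousOn.div (by have := hF.continuous; fun_prop) continuousOn_id fun s hs ↦ ne_of_gt hs
  unfold youngRemainder
  fun_prop

lemma lintegral_Ioc_hardy_le (hn : n ≠ 0) (hF : ContDiff ℝ 1 F) {s₁ T : ℝ} (hs₁ : 0 < s₁)
    (hT : s₁ ≤ T) (h0 : F s₁ = 0) :
    ∫⁻ s in Ioc s₁ T, ENNReal.ofReal ((n / (n + 1) * |F s| / s) ^ (n + 1) +
        youngRemainder n |deriv F s| (n / (n + 1) * |F s| / s)) ≤
      ∫⁻ s in Ioc s₁ T, ENNReal.ofReal (|deriv F s| ^ (n + 1)) := by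
  have hpos {s : ℝ} (hs : s ∈ Icc s₁ T) : 0 < s := hs₁.trans_le hs.1
  have hF' : Continuous (deriv F) := hF.continuous_deriv_one
  have hLHS : IntegrableOn (fun s ↦ (n / (n + 1) * |F s| / s) ^ (n + 1) +
      youngRemainder n |deriv F s| (n / (n + 1) * |F s| / s)) (Icc s₁ T) :=
    ((continuousOn_hardyLower n hF).mono fun s ↦ hpos).integrableOn_Icc
  have hRHS : IntegrableOn (fun s ↦ |deriv F s| ^ (n + 1)) (Icc s₁ T) :=
    (hF'.abs.pow (n + 1)).integrableOn_Icc
  have hflux : hardyFlux n F T - hardyFlux n F s₁ ≤ ∫ s in s₁..T, (|deriv F s| ^ (n + 1) -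
      ((n / (n + 1) * |F s| / s) ^ (n + 1) +
        youngRemainder n |deriv F s| (n / (n + 1) * |F s| / s))) := by
    have hdiff (s : ℝ) : DifferentiableAt ℝ F s := hF.differentiable one_ne_zero s
    have hderiv {s : ℝ} (hs : s ∈ Icc s₁ T) := hasDerivAt_hardyFlux hn (hpos hs) (hdiff s)
    exact intervalIntegral.sub_le_integral_of_hasDeriv_right_of_le hT
      (fun s hs ↦ (hderiv hs).continuousAt.continuousWithinAt)
      (fun s hs ↦ (hderiv (Ioo_subset_Icc_self hs)).differentiableAt.hasDerivAt.hasDerivWithinAt)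
      (hRHS.sub hLHS)
      (fun s hs ↦ deriv_hardyFlux_le hn (hpos (Ioo_subset_Icc_self hs)) (hdiff s))
  have hflux₁ : hardyFlux n F s₁ = 0 := by simp [hardyFlux, h0]
  have hfluxT : 0 ≤ hardyFlux n F T := by
    have := hs₁.trans_le hT
    unfold hardyFlux
    positivity
  rw [intervalIntegral.integral_of_le hT, integral_sub (hRHS.mono_set Ioc_subset_Icc_self)
    (hLHS.mono_set Ioc_subset_Icc_self)] at hflux
  rw [← ofReal_integral_eq_lintegral_ofReal (hLHS.mono_set Ioc_subset_Icc_self)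
      ((ae_restrict_iff' measurableSet_Ioc).2 (Eventually.of_forall fun s hs ↦ ?_)),
    ← ofReal_integral_eq_lintegral_ofReal (hRHS.mono_set Ioc_subset_Icc_self)
      (Eventually.of_forall fun s ↦ by positivity)]
  · exact ENNReal.ofReal_le_ofReal (by linarith)
  · have := hpos (Ioc_subset_Icc_self hs)
    exact add_nonneg (by positivity) (youngRemainder_nonneg n (by positivity) (by positivity))

lemma lintegral_hardy_le (hn : n ≠ 0) (hF : ContDiff ℝ 1 F) {s₁ : ℝ} (hs₁ : 0 < s₁)
    (h0 : ∀ s ≤ s₁, F s = 0) :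
    ∫⁻ s, ENNReal.ofReal ((n / (n + 1) * |F s| / s) ^ (n + 1) +
        youngRemainder n |deriv F s| (n / (n + 1) * |F s| / s)) ≤
      ∫⁻ s, ENNReal.ofReal (|deriv F s| ^ (n + 1)) := by
  have : Continuous (deriv F) := hF.continuous_deriv_one
  have hFm := hF.continuous.measurable
  have hright : ∫⁻ s in Ioi s₁, ENNReal.ofReal ((n / (n + 1) * |F s| / s) ^ (n + 1) +
        youngRemainder n |deriv F s| (n / (n + 1) * |F s| / s)) ≤
      ∫⁻ s in Ioi s₁, ENNReal.ofReal (|deriv F s| ^ (n + 1)) := by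
    have hcover : AECover (volume.restrict (Ioi s₁)) atTop (Iic : ℝ → Set ℝ) :=
      aecover_Iic tendsto_id
    refine le_of_tendsto_of_tendsto
      (hcover.lintegral_tendsto_of_countably_generated (by unfold youngRemainder; fun_prop))
      (hcover.lintegral_tendsto_of_countably_generated (by fun_prop)) ?_
    filter_upwards [eventually_ge_atTop s₁] with T hT
    simp only [Measure.restrict_restrict measurableSet_Iic, inter_comm (Iic T), Ioi_inter_Iic]
    exact lintegral_Ioc_hardy_le hn hF hs₁ hT (h0 s₁ le_rfl)
  refine (lintegral_add_compl _ (measurableSet_Ioi (a := s₁))).ge.trans ((add_le_add hright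
    (setLIntegral_mono' measurableSet_Ioi.compl fun s hs ↦ ?_)).trans_eq
    (lintegral_add_compl _ measurableSet_Ioi))
  simp [youngRemainder, h0 s (not_lt.1 hs), hn]

lemma eq_zero_of_abs_deriv_le_mul_div (hF : ContDiff ℝ 1 F) {s₁ a : ℝ} (hs₁ : 0 < s₁)
    (ha : 0 ≤ a) (h0 : F s₁ = 0) (hle : ∀ s, s₁ ≤ s → |deriv F s| ≤ a * |F s| / s) {s : ℝ}
    (hs : s₁ ≤ s) : F s = 0 := by
  refine eq_zero_of_abs_deriv_le_mul_abs_self_of_eq_zero_right (K := a / s₁) (b := s)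
    hF.continuous.continuousOn
    (fun t _ ↦ (hF.differentiable one_ne_zero t).hasDerivAt.hasDerivWithinAt)
    h0 (fun t ht ↦ ?_) s ⟨hs, le_rfl⟩
  have := hs₁.trans_le ht.1
  calc |deriv F t| ≤ a * |F t| / t := hle t ht.1
    _ ≤ a * |F t| / s₁ := by gcongr; exact ht.1
    _ = a / s₁ * |F t| := by ring

end HalfLine

/-! ### Sharpness on the half-line -/

section HalfLineSharpness

lemma continuous_integral_abs_mul_add_mul_deriv_pow {χ : ℝ → ℝ} (hχ : ContDiff ℝ 1 χ)
    (hχc : HasCompactSupport χ) {N : ℕ} (hN : N ≠ 0) (a : ℝ) :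
    Continuous fun δ ↦ ∫ z, |a * χ z + δ * deriv χ z| ^ N := by
  have hχ₀ : Continuous χ := hχ.continuous
  have : Continuous (deriv χ) := hχ.continuous_deriv_one
  have hsupp (δ : ℝ) : ∫ z, |a * χ z + δ * deriv χ z| ^ N =
      ∫ z in tsupport χ, |a * χ z + δ * deriv χ z| ^ N :=
    (setIntegral_eq_integral_of_forall_compl_eq_zero fun z hz ↦ by
      simp [image_eq_zero_of_notMem_tsupport hz, hN,
        image_eq_zero_of_notMem_tsupport fun h ↦ hz (tsupport_deriv_subset h)]).symm
  simp only [hsupp]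
  exact continuous_parametric_integral_of_continuous
    (f := fun δ z ↦ |a * χ z + δ * deriv χ z| ^ N) (by unfold Function.uncurry; fun_prop)
    hχc.isCompact

lemma exists_integral_abs_mul_add_deriv_lt {N : ℕ} (hN : N ≠ 0) {a q : ℝ} (hq : |a| ^ N < q)
    (b : ℝ) :
    ∃ (G : ℝ → ℝ) (T : ℝ), ContDiff ℝ (⊤ : ℕ∞) G ∧ (∀ z ≤ b, G z = 0) ∧ (∀ z ≥ T, G z = 0) ∧
      ∫ z, |a * G z + deriv G z| ^ N < q * ∫ z, |G z| ^ N := by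
  let χ : ContDiffBump (2 : ℝ) := ⟨1 / 2, 1, by norm_num, by norm_num⟩
  have hχ : ContDiff ℝ (⊤ : ℕ∞) χ := χ.contDiff
  have hχ_zero {z : ℝ} (hz : z ≤ 1 ∨ 3 ≤ z) : χ z = 0 := χ.zero_of_le_dist <| by
    rw [Real.dist_eq, le_abs]
    rcases hz with hz | hz
    · exact Or.inr (by simp only [χ]; linarith)
    · exact Or.inl (by simp only [χ]; linarith)
  have hI : 0 < ∫ z, |χ z| ^ N :=
    (χ.continuous.abs.pow N).integral_pos_of_hasCompactSupport_nonneg_nonzero (x := 2)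
      (χ.hasCompactSupport.comp_left (g := fun y : ℝ ↦ |y| ^ N) (by simp [hN]))
      (fun z ↦ by positivity)
      (pow_ne_zero N (abs_ne_zero.2 (χ.pos_of_mem_ball (Metric.mem_ball_self χ.rOut_pos)).ne'))
  have hzero : ∫ z, |a * χ z + 0 * deriv χ z| ^ N < q * ∫ z, |χ z| ^ N := by
    simp only [zero_mul, add_zero, abs_mul, mul_pow, integral_const_mul]
    gcongr
  have hcont := continuous_integral_abs_mul_add_mul_deriv_pow (hχ.of_le (by norm_num))
    χ.hasCompactSupport hN a
  obtain ⟨L, hL_lt, hbL, hL⟩ := ((tendsto_inv_atTop_zero.eventually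
    (hcont.continuousAt.eventually_lt continuousAt_const hzero)).and
    ((eventually_ge_atTop b).and (eventually_gt_atTop (0 : ℝ)))).exists
  refine ⟨fun z ↦ χ (z / L), 3 * L, hχ.comp (contDiff_id.div_const L),
    fun z hz ↦ hχ_zero (.inl ((div_le_one hL).2 (hz.trans hbL))),
    fun z hz ↦ hχ_zero (.inr ((le_div_iff₀ hL).2 hz)), ?_⟩
  have hderiv (z : ℝ) : deriv (fun z ↦ χ (z / L)) z = L⁻¹ * deriv χ (z / L) := by
    simpa [div_eq_inv_mul] using deriv_comp_mul_left L⁻¹ χ z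
  simp only [hderiv]
  rw [Measure.integral_comp_div (fun z ↦ |a * χ z + L⁻¹ * deriv χ z| ^ N),
    Measure.integral_comp_div (fun z ↦ |χ z| ^ N), smul_eq_mul, smul_eq_mul,
    mul_left_comm, abs_of_pos hL]
  exact mul_lt_mul_of_pos_left hL_lt hL

/-- The function `s ^ a * G (log s)` on the half-line `s > 0`, extended by zero. -/
def emdenLift (a : ℝ) (G : ℝ → ℝ) (s : ℝ) : ℝ :=
  (Ioi 0).indicator (fun s ↦ Real.exp (a * Real.log s) * G (Real.log s)) s

variable {a b T : ℝ} {G : ℝ → ℝ}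

lemma emdenLift_exp (a : ℝ) (G : ℝ → ℝ) (z : ℝ) :
    emdenLift a G (Real.exp z) = Real.exp (a * z) * G z := by
  rw [emdenLift, indicator_of_mem (mem_Ioi.2 (Real.exp_pos z)), Real.log_exp]

lemma emdenLift_eventuallyEq (a : ℝ) (G : ℝ → ℝ) {s : ℝ} (hs : 0 < s) :
    emdenLift a G =ᶠ[𝓝 s] fun s ↦ Real.exp (a * Real.log s) * G (Real.log s) := by
  filter_upwards [Ioi_mem_nhds hs] with t ht using indicator_of_mem ht _

lemma emdenLift_eq_zero_of_le (a : ℝ) (hG : ∀ z ≤ b, G z = 0) {s : ℝ} (hs : s ≤ Real.exp b) :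
    emdenLift a G s = 0 := by
  refine indicator_apply_eq_zero.2 fun hs0 ↦ ?_
  rw [hG _ ((Real.log_le_iff_le_exp hs0).2 hs), mul_zero]

lemma emdenLift_eq_zero_of_ge (a : ℝ) (hG : ∀ z ≥ T, G z = 0) {s : ℝ} (hs : Real.exp T ≤ s) :
    emdenLift a G s = 0 := by
  refine indicator_apply_eq_zero.2 fun hs0 ↦ ?_
  rw [hG _ ((Real.le_log_iff_exp_le hs0).2 hs), mul_zero]

lemma contDiff_emdenLift (a : ℝ) (hG : ContDiff ℝ (⊤ : ℕ∞) G) (hb : ∀ z ≤ b, G z = 0) :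
    ContDiff ℝ (⊤ : ℕ∞) (emdenLift a G) := by
  refine contDiff_iff_contDiffAt.2 fun s ↦ ?_
  rcases le_or_gt s 0 with hs | hs
  · refine (contDiffAt_const (c := (0 : ℝ))).congr_of_eventuallyEq ?_
    filter_upwards [Iio_mem_nhds (hs.trans_lt (Real.exp_pos b))] with t ht
    exact emdenLift_eq_zero_of_le a hb ht.le
  · have hlog : ContDiffAt ℝ (⊤ : ℕ∞) Real.log s := Real.contDiffAt_log.2 hs.ne'
    exact ((contDiffAt_const.mul hlog).exp.mul (hG.contDiffAt.comp s hlog)).congr_of_eventuallyEq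
      (emdenLift_eventuallyEq a G hs)

lemma deriv_emdenLift_exp (a : ℝ) {z : ℝ} (hG : DifferentiableAt ℝ G z) :
    deriv (emdenLift a G) (Real.exp z) =
      Real.exp (a * z) * (Real.exp z)⁻¹ * (a * G z + deriv G z) := by
  have hlog := Real.hasDerivAt_log (Real.exp_ne_zero z)
  have hGlog := HasDerivAt.comp (h₂ := G) (Real.exp z) (by rw [Real.log_exp]; exact hG.hasDerivAt)
    hlog
  refine (((hlog.const_mul a).exp.mul hGlog).congr_of_eventuallyEq
    (emdenLift_eventuallyEq a G (Real.exp_pos z))).deriv.trans ?_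
  simp only [Function.comp_apply, Real.log_exp]
  ring

lemma integral_eq_integral_exp {g : ℝ → ℝ} (hg : ∀ s ≤ 0, g s = 0) :
    ∫ s, g s = ∫ z, Real.exp z * g (Real.exp z) := by
  rw [← setIntegral_eq_integral_of_forall_compl_eq_zero (s := Ioi 0) fun s hs ↦ hg s (not_lt.1 hs),
    ← Real.range_exp, ← image_univ, integral_image_eq_integral_abs_deriv_smul MeasurableSet.univ
      (fun z _ ↦ (Real.hasDerivAt_exp z).hasDerivWithinAt) Real.exp_injective.injOn,
    setIntegral_univ]
  simp only [Real.abs_exp, smul_eq_mul]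

/-- The exponent `a = n / (n + 1)` is the one for which the weight `exp z` of the substitution
`s = exp z` cancels against `|s ^ a / s| ^ (n + 1)`. -/
lemma exp_mul_abs_pow_succ (n : ℕ) (z c : ℝ) :
    Real.exp z * |Real.exp (n / (n + 1) * z) * (Real.exp z)⁻¹ * c| ^ (n + 1) = |c| ^ (n + 1) := by
  rw [abs_mul, mul_pow, ← mul_assoc, ← Real.exp_neg, ← Real.exp_add, Real.abs_exp,
    ← Real.exp_nat_mul, ← Real.exp_add]
  have hexp : z + (n + 1 : ℕ) * (n / (n + 1) * z + -z) = 0 := by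
    push_cast
    field_simp
    ring
  rw [hexp, Real.exp_zero, one_mul]

lemma integral_abs_deriv_emdenLift_pow (n : ℕ) (hG : Differentiable ℝ G) (hb : ∀ z ≤ b, G z = 0) :
    ∫ s, |deriv (emdenLift (n / (n + 1)) G) s| ^ (n + 1) =
      ∫ z, |n / (n + 1) * G z + deriv G z| ^ (n + 1) := by
  rw [integral_eq_integral_exp fun s hs ↦ ?_]
  · simp only [deriv_emdenLift_exp _ (hG _), exp_mul_abs_pow_succ]
  · have hzero : emdenLift (n / (n + 1)) G =ᶠ[𝓝 s] fun _ ↦ 0 := by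
      filter_upwards [Iio_mem_nhds (hs.trans_lt (Real.exp_pos b))] with t ht
      exact emdenLift_eq_zero_of_le _ hb ht.le
    simp [hzero.deriv_eq]

lemma integral_abs_emdenLift_div_pow (n : ℕ) (hb : ∀ z ≤ b, G z = 0) :
    ∫ s, (|emdenLift (n / (n + 1)) G s| / s) ^ (n + 1) = ∫ z, |G z| ^ (n + 1) := by
  rw [integral_eq_integral_exp fun s hs ↦ by
    simp [emdenLift_eq_zero_of_le _ hb (hs.trans (Real.exp_pos b).le)]]
  refine integral_congr_ae (Eventually.of_forall fun z ↦ ?_)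
  simp only [emdenLift_exp]
  rw [← exp_mul_abs_pow_succ n z (G z), mul_right_comm _ (Real.exp z)⁻¹, ← div_eq_mul_inv, abs_div,
    Real.abs_exp z]

lemma exists_integral_abs_deriv_pow_lt (n : ℕ) {q : ℝ} (hq : (n / (n + 1) : ℝ) ^ (n + 1) < q)
    (S : ℝ) :
    ∃ (F : ℝ → ℝ) (T : ℝ), ContDiff ℝ (⊤ : ℕ∞) F ∧ (∀ s ≤ S, F s = 0) ∧ (∀ s ≥ T, F s = 0) ∧
      ∫ s, |deriv F s| ^ (n + 1) < q * ∫ s, (|F s| / s) ^ (n + 1) := by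
  obtain ⟨G, T, hG, hGS, hGT, hlt⟩ := exists_integral_abs_mul_add_deriv_lt n.succ_ne_zero
    (a := n / (n + 1)) (q := q) (by rwa [abs_of_nonneg (by positivity)]) S
  refine ⟨emdenLift (n / (n + 1)) G, Real.exp T, contDiff_emdenLift _ hG hGS, fun s hs ↦ ?_,
    fun s hs ↦ emdenLift_eq_zero_of_ge _ hGT hs, ?_⟩
  · exact emdenLift_eq_zero_of_le _ hGS (by linarith [Real.add_one_le_exp S])
  · rwa [integral_abs_deriv_emdenLift_pow n (hG.differentiable (by norm_num)) hGS,
      integral_abs_emdenLift_div_pow n hGS]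

end HalfLineSharpness

/-! ### The critical Hardy inequality with respect to a gauge -/

section CriticalHardy

lemma eqOn_zero_of_integral_nonpos {X : Type*} [TopologicalSpace X] [MeasurableSpace X]
    {ν : Measure X} [ν.IsOpenPosMeasure] {f : X → ℝ} {U : Set X}
    (hU : IsOpen U) (hfU : ContinuousOn f U) (hf : Integrable f ν) (hf0 : ∀ x, 0 ≤ f x)
    (hint : ∫ x, f x ∂ν ≤ 0) : EqOn f 0 U :=
  Measure.eqOn_open_of_ae_eq
    (ae_restrict_of_ae ((integral_eq_zero_iff_of_nonneg hf0 hf).1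
      (hint.antisymm (integral_nonneg hf0)))) hU hfU continuousOn_const

variable {E : Type*} [NormedAddCommGroup E] [NormedSpace ℝ E] {p : E → ℝ} {R R₁ : ℝ} {n : ℕ}
  {u : E → ℝ}

lemma contDiff_comp_logRay (hu : ContDiff ℝ 1 u) (p : E → ℝ) (R : ℝ) (ω : E) :
    ContDiff ℝ 1 fun s ↦ u (logRay p R ω s) := by
  unfold logRay
  fun_prop

lemma deriv_comp_logRay (hu : Differentiable ℝ u) (p : E → ℝ) (R : ℝ) (ω : E) (s : ℝ) :
    deriv (fun s ↦ u (logRay p R ω s)) s =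
      -fderiv ℝ u (logRay p R ω s) (logRay p R ω s) :=
  ((hu _).hasFDerivAt.comp_hasDerivAt s (hasDerivAt_logRay p R ω s)).deriv.trans
    (map_neg _ _)

/-- The zeroth-order term `((N - 1) / N) |u| / log (R / p)` of the critical Hardy inequality, with
`N = n + 1`. -/
def hardyTerm (n : ℕ) (p : E → ℝ) (R : ℝ) (u : E → ℝ) (x : E) : ℝ :=
  n / (n + 1) * |u x| / Real.log (R / p x)

namespace IsGauge

lemma hardyTerm_nonneg (hp : IsGauge p) (hR : R₁ < R) (h0 : ∀ x, R₁ ≤ p x → u x = 0) (x : E) :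
    0 ≤ hardyTerm n p R u x := by
  rcases le_or_gt R₁ (p x) with hx | hx
  · simp [hardyTerm, h0 x hx]
  rcases (hp.nonneg x).eq_or_lt with hx0 | hx0
  · simp [hardyTerm, ← hx0]
  · have := Real.log_nonneg ((one_le_div hx0).2 (hx.trans hR).le)
    unfold hardyTerm
    positivity

lemma isOpen_punctured_setOf_lt (hp : IsGauge p) (R : ℝ) : IsOpen {x | x ≠ 0 ∧ p x < R} :=
  isOpen_ne.inter (isOpen_lt hp.continuous continuous_const)

lemma continuousOn_hardyTerm (hp : IsGauge p) (hR : 0 < R) (hu : Continuous u) :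
    ContinuousOn (hardyTerm n p R u) {x | x ≠ 0 ∧ p x < R} := by
  have hquot : ContinuousOn (fun x ↦ R / p x) {x | x ≠ 0 ∧ p x < R} :=
    continuousOn_const.div hp.continuous.continuousOn fun x hx ↦ (hp.pos hx.1).ne'
  refine ContinuousOn.div (by fun_prop) (hquot.log fun x hx ↦ ?_) fun x hx ↦ ?_
  · have := hp.pos hx.1
    positivity
  · exact (Real.log_pos ((one_lt_div (hp.pos hx.1)).2 hx.2)).ne'

lemma comp_logRay_eq_zero (hp : IsGauge p) (hR₁ : 0 < R₁) (hR : R₁ < R)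
    (h0 : ∀ x, R₁ ≤ p x → u x = 0) {ω : E} (hω : ω ≠ 0) {s : ℝ} (hs : s ≤ Real.log (R / R₁)) :
    u (logRay p R ω s) = 0 := by
  have hR0 := hR₁.trans hR
  refine h0 _ ?_
  rw [hp.map_logRay hR0 hω, Real.exp_neg, ← div_eq_mul_inv, le_div_iff₀ (Real.exp_pos s),
    ← le_div_iff₀' hR₁]
  exact (Real.le_log_iff_exp_le (by positivity)).1 hs

lemma hardyTerm_logRay (hp : IsGauge p) (hR : 0 < R) {ω : E} (hω : ω ≠ 0) (s : ℝ) :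
    hardyTerm n p R u (logRay p R ω s) = n / (n + 1) * |u (logRay p R ω s)| / s := by
  rw [hardyTerm, hp.log_div_map_logRay hp hR hω, div_self (hp.pos hω).ne', Real.log_one, add_zero]

lemma eq_zero_of_abs_fderiv_self_le [Nontrivial E] (hp : IsGauge p) (hR₁ : 0 < R₁) (hR : R₁ < R)
    (hu : ContDiff ℝ 1 u) (h0 : ∀ x, R₁ ≤ p x → u x = 0)
    (hle : ∀ x, x ≠ 0 → p x < R → |fderiv ℝ u x x| ≤ hardyTerm n p R u x) : u = 0 := by
  have hR0 := hR₁.trans hR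
  have hs₁ : 0 < Real.log (R / R₁) := Real.log_pos ((one_lt_div hR₁).2 hR)
  refine hu.continuous.ext_on (dense_compl_singleton 0) continuous_const fun x (hx : x ≠ 0) ↦ ?_
  rcases le_total R₁ (p x) with hpx | hpx
  · exact h0 x hpx
  have hpos := hp.pos hx
  rw [← hp.logRay_log_div hR0 hx]
  refine eq_zero_of_abs_deriv_le_mul_div (a := n / (n + 1)) (contDiff_comp_logRay hu p R x) hs₁
    (by positivity) (hp.comp_logRay_eq_zero hR₁ hR h0 hx le_rfl) (fun s hs ↦ ?_)
    (Real.log_le_log (by positivity) (by gcongr))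
  rw [deriv_comp_logRay (hu.differentiable one_ne_zero), abs_neg, ← hp.hardyTerm_logRay hR0 hx]
  refine hle _ (hp.logRay_ne_zero hR0 hx s) ?_
  rw [hp.map_logRay hR0 hx]
  exact mul_lt_of_lt_one_right hR0 (Real.exp_lt_one_iff.2 (neg_neg_of_pos (hs₁.trans_le hs)))

variable [MeasurableSpace E] [BorelSpace E] {μ : Measure E}

lemma measurable_hardyTerm (hp : IsGauge p) (hu : Continuous u) :
    Measurable (hardyTerm n p R u) := by
  have := hp.continuous.measurable
  have := hu.measurable
  unfold hardyTerm
  fun_prop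

variable [FiniteDimensional ℝ E]

lemma integrable_abs_fderiv_self_pow [Nontrivial E] [IsFiniteMeasureOnCompacts μ]
    (hp : IsGauge p) (hu : ContDiff ℝ 1 u) (hc : HasCompactSupport u) :
    Integrable (fun x ↦ |fderiv ℝ u x x| ^ Module.finrank ℝ E) (gaugeMeasure μ p) := by
  obtain ⟨c, hc0, hle⟩ := hp.exists_mul_norm_le
  have hu' : Continuous (fderiv ℝ u) := hu.continuous_fderiv one_ne_zero
  have hpm := hp.continuous.measurable
  have hN : Module.finrank ℝ E ≠ 0 := Module.finrank_pos.ne'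
  have hdom : Integrable (fun x ↦ (‖fderiv ℝ u x‖ / c) ^ Module.finrank ℝ E) μ :=
    Continuous.integrable_of_hasCompactSupport (by fun_prop)
      ((hc.fderiv ℝ).comp_left (g := fun L ↦ (‖L‖ / c) ^ Module.finrank ℝ E) (by simp [hN]))
  refine (integrable_gaugeMeasure_iff hp).2 (hdom.mono' ?_ (Eventually.of_forall fun x ↦ ?_))
  · have : Continuous fun x ↦ fderiv ℝ u x x := hu'.clm_apply continuous_id
    exact ((hpm.pow_const _).inv.mul (this.abs.measurable.pow_const _)).aestronglyMeasurable
  have hpx := hp.nonneg x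
  have hratio : |fderiv ℝ u x x| / p x ≤ ‖fderiv ℝ u x‖ / c := by
    refine div_le_of_le_mul₀ hpx (by positivity) ?_
    calc |fderiv ℝ u x x| ≤ ‖fderiv ℝ u x‖ * ‖x‖ := (fderiv ℝ u x).le_opNorm x
      _ = ‖fderiv ℝ u x‖ / c * (c * ‖x‖) := by field_simp
      _ ≤ ‖fderiv ℝ u x‖ / c * p x := by gcongr; exact hle x
  rw [Real.norm_of_nonneg (by positivity), inv_mul_eq_div, ← div_pow]
  gcongr

lemma lintegral_gaugeMeasure_hardy_le [Nontrivial E] [μ.IsAddHaarMeasure] (hp : IsGauge p)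
    (hn : n ≠ 0) (hR₁ : 0 < R₁) (hR : R₁ < R) (hu : ContDiff ℝ 1 u)
    (h0 : ∀ x, R₁ ≤ p x → u x = 0) :
    ∫⁻ x, ENNReal.ofReal (hardyTerm n p R u x ^ (n + 1) +
        youngRemainder n |fderiv ℝ u x x| (hardyTerm n p R u x)) ∂gaugeMeasure μ p ≤
      ∫⁻ x, ENNReal.ofReal (|fderiv ℝ u x x| ^ (n + 1)) ∂gaugeMeasure μ p := by
  have hR0 := hR₁.trans hR
  have hA : Measurable fun x ↦ fderiv ℝ u x x :=
    ((hu.continuous_fderiv one_ne_zero).clm_apply continuous_id).measurable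
  have hB : Measurable (hardyTerm n p R u) := hp.measurable_hardyTerm hu.continuous
  rw [hp.lintegral_gaugeMeasure_eq_logRay hR0 (by unfold youngRemainder; fun_prop),
    hp.lintegral_gaugeMeasure_eq_logRay hR0 (by fun_prop)]
  refine lintegral_mono fun ω ↦ ?_
  have hω : (ω : E) ≠ 0 := ne_zero_of_mem_unit_sphere ω
  simpa only [hp.hardyTerm_logRay hR0 hω, deriv_comp_logRay (hu.differentiable one_ne_zero),
    abs_neg] using lintegral_hardy_le hn (contDiff_comp_logRay hu p R ω)
      (Real.log_pos ((one_lt_div hR₁).2 hR)) fun s hs ↦ hp.comp_logRay_eq_zero hR₁ hR h0 hω hs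

lemma integrable_hardyTerm_pow_add [Nontrivial E] [μ.IsAddHaarMeasure] (hp : IsGauge p)
    (hn : n ≠ 0) (hN : Module.finrank ℝ E = n + 1) (hR₁ : 0 < R₁) (hR : R₁ < R)
    (hu : ContDiff ℝ 1 u) (h0 : ∀ x, R₁ ≤ p x → u x = 0) :
    Integrable (fun x ↦ hardyTerm n p R u x ^ (n + 1) +
      youngRemainder n |fderiv ℝ u x x| (hardyTerm n p R u x)) (gaugeMeasure μ p) := by
  have : Measurable fun x ↦ fderiv ℝ u x x :=
    ((hu.continuous_fderiv one_ne_zero).clm_apply continuous_id).measurable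
  have hB : Measurable (hardyTerm n p R u) := hp.measurable_hardyTerm hu.continuous
  have hA_int := hp.integrable_abs_fderiv_self_pow (μ := μ) hu (hp.hasCompactSupport h0)
  rw [hN] at hA_int
  refine (lintegral_ofReal_ne_top_iff_integrable (by unfold youngRemainder; fun_prop)
    (Eventually.of_forall fun x ↦ ?_)).1 ((hp.lintegral_gaugeMeasure_hardy_le hn hR₁ hR hu
      h0).trans_lt (hA_int.lintegral_lt_top)).ne
  have := hp.hardyTerm_nonneg (n := n) hR h0 x
  exact add_nonneg (by positivity) (youngRemainder_nonneg n (abs_nonneg _) this)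

lemma integrable_hardyTerm_pow [Nontrivial E] [μ.IsAddHaarMeasure] (hp : IsGauge p)
    (hn : n ≠ 0) (hN : Module.finrank ℝ E = n + 1) (hR₁ : 0 < R₁) (hR : R₁ < R)
    (hu : ContDiff ℝ 1 u) (h0 : ∀ x, R₁ ≤ p x → u x = 0) :
    Integrable (fun x ↦ hardyTerm n p R u x ^ (n + 1)) (gaugeMeasure μ p) := by
  have hB : Measurable (hardyTerm n p R u) := hp.measurable_hardyTerm hu.continuous
  refine (hp.integrable_hardyTerm_pow_add hn hN hR₁ hR hu h0).mono' (by fun_prop)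
    (Eventually.of_forall fun x ↦ ?_)
  have := hp.hardyTerm_nonneg (n := n) hR h0 x
  rw [Real.norm_of_nonneg (by positivity)]
  exact le_add_of_nonneg_right (youngRemainder_nonneg n (abs_nonneg _) this)

lemma integral_hardyTerm_pow_pos [Nontrivial E] [μ.IsAddHaarMeasure] (hp : IsGauge p)
    (hn : n ≠ 0) (hN : Module.finrank ℝ E = n + 1) (hR₁ : 0 < R₁) (hR : R₁ < R)
    (hu : ContDiff ℝ 1 u) (h0 : ∀ x, R₁ ≤ p x → u x = 0)
    (hu0 : u ≠ 0) : 0 < ∫ x, hardyTerm n p R u x ^ (n + 1) ∂gaugeMeasure μ p := by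
  by_contra! hle
  have := hp.isOpenPosMeasure_gaugeMeasure (μ := μ)
  have hR0 := hR₁.trans hR
  have hzero := eqOn_zero_of_integral_nonpos (hp.isOpen_punctured_setOf_lt R)
    ((hp.continuousOn_hardyTerm hR0 hu.continuous).pow (n + 1))
    (hp.integrable_hardyTerm_pow hn hN hR₁ hR hu h0)
    (fun x ↦ pow_nonneg (hp.hardyTerm_nonneg hR h0 x) _) hle
  refine hu0 (hu.continuous.ext_on (dense_compl_singleton 0) continuous_const
    fun x (hx : x ≠ 0) ↦ ?_)
  rcases le_or_gt R (p x) with hpx | hpx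
  · exact h0 x (hR.le.trans hpx)
  have hlog := Real.log_pos ((one_lt_div (hp.pos hx)).2 hpx)
  simpa [hardyTerm, hn, hlog.ne', Nat.cast_add_one_ne_zero] using hzero ⟨hx, hpx⟩

lemma integral_hardyTerm_pow_add_le [Nontrivial E] [μ.IsAddHaarMeasure] (hp : IsGauge p)
    (hn : n ≠ 0) (hN : Module.finrank ℝ E = n + 1) (hR₁ : 0 < R₁) (hR : R₁ < R)
    (hu : ContDiff ℝ 1 u) (h0 : ∀ x, R₁ ≤ p x → u x = 0) :
    ∫ x, (hardyTerm n p R u x ^ (n + 1) +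
        youngRemainder n |fderiv ℝ u x x| (hardyTerm n p R u x)) ∂gaugeMeasure μ p ≤
      ∫ x, |fderiv ℝ u x x| ^ (n + 1) ∂gaugeMeasure μ p := by
  have hA_int := hp.integrable_abs_fderiv_self_pow (μ := μ) hu (hp.hasCompactSupport h0)
  rw [hN] at hA_int
  rw [← ENNReal.ofReal_le_ofReal_iff (integral_nonneg fun x ↦ by positivity),
    ofReal_integral_eq_lintegral_ofReal (hp.integrable_hardyTerm_pow_add hn hN hR₁ hR hu h0)
      (Eventually.of_forall fun x ↦ ?_),
    ofReal_integral_eq_lintegral_ofReal hA_int (Eventually.of_forall fun x ↦ by positivity)]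
  · exact hp.lintegral_gaugeMeasure_hardy_le hn hR₁ hR hu h0
  · have := hp.hardyTerm_nonneg (n := n) hR h0 x
    exact add_nonneg (by positivity) (youngRemainder_nonneg n (abs_nonneg _) this)

theorem integral_hardyTerm_pow_lt [Nontrivial E] [μ.IsAddHaarMeasure] (hp : IsGauge p)
    (hn : n ≠ 0) (hN : Module.finrank ℝ E = n + 1) (hR₁ : 0 < R₁) (hR : R₁ < R)
    (hu : ContDiff ℝ 1 u) (h0 : ∀ x, R₁ ≤ p x → u x = 0) (hu0 : u ≠ 0) :
    ∫ x, hardyTerm n p R u x ^ (n + 1) ∂gaugeMeasure μ p <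
      ∫ x, |fderiv ℝ u x x| ^ (n + 1) ∂gaugeMeasure μ p := by
  have hB_nonneg := hp.hardyTerm_nonneg (n := n) hR h0
  have hB_int := hp.integrable_hardyTerm_pow (μ := μ) hn hN hR₁ hR hu h0
  have hBD_int := hp.integrable_hardyTerm_pow_add (μ := μ) hn hN hR₁ hR hu h0
  have hD_int : Integrable (fun x ↦ youngRemainder n |fderiv ℝ u x x| (hardyTerm n p R u x))
      (gaugeMeasure μ p) :=
    (hBD_int.sub hB_int).congr (Eventually.of_forall fun x ↦ add_sub_cancel_left _ _)
  have hle := hp.integral_hardyTerm_pow_add_le (μ := μ) hn hN hR₁ hR hu h0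
  rw [integral_add hB_int hD_int] at hle
  refine (lt_add_of_pos_right _ ?_).trans_le hle
  by_contra! hD_nonpos
  have := hp.isOpenPosMeasure_gaugeMeasure (μ := μ)
  have : Continuous fun x ↦ |fderiv ℝ u x x| :=
    ((hu.continuous_fderiv one_ne_zero).clm_apply continuous_id).abs
  have hB_cont := hp.continuousOn_hardyTerm (n := n) (hR₁.trans hR) hu.continuous
  have hD_zero := eqOn_zero_of_integral_nonpos (hp.isOpen_punctured_setOf_lt R)
    (by unfold youngRemainder; fun_prop) hD_int
    (fun x ↦ youngRemainder_nonneg n (abs_nonneg _) (hB_nonneg x)) hD_nonpos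
  exact hu0 (hp.eq_zero_of_abs_fderiv_self_le hR₁ hR hu h0 fun x hx hpx ↦
    (eq_of_youngRemainder_eq_zero hn (abs_nonneg _) (hB_nonneg x) (hD_zero ⟨hx, hpx⟩)).le)

end IsGauge

end CriticalHardy

/-! ### Functions of the logarithmic depth -/

section Radial

variable {E : Type*} [NormedAddCommGroup E] [NormedSpace ℝ E] {p q : E → ℝ} {R R₁ T : ℝ} {n : ℕ}
  {F : ℝ → ℝ}

namespace IsGauge

lemma contDiff_comp_log_div (hq : IsGauge q) (hq_smooth : ∀ x ≠ 0, ContDiffAt ℝ (⊤ : ℕ∞) q x)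
    (hR : 0 < R) (hF : ContDiff ℝ (⊤ : ℕ∞) F) (hF0 : F 0 = 0) (hT : ∀ s ≥ T, F s = 0) :
    ContDiff ℝ (⊤ : ℕ∞) fun x ↦ F (Real.log (R / q x)) := by
  refine contDiff_iff_contDiffAt.2 fun x ↦ ?_
  rcases eq_or_ne x 0 with rfl | hx
  · refine (contDiffAt_const (c := (0 : ℝ))).congr_of_eventuallyEq ?_
    have hmem : {y | q y < R * Real.exp (-T)} ∈ 𝓝 (0 : E) :=
      (isOpen_lt hq.continuous continuous_const).mem_nhds (by
        rw [mem_ofPred_eq, hq.map_zero]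
        positivity)
    filter_upwards [hmem] with y (hy : q y < R * Real.exp (-T))
    rcases eq_or_ne y 0 with rfl | hy0
    · simp [hq.map_zero, hF0]
    · have hpos := hq.pos hy0
      refine hT _ ((Real.le_log_iff_exp_le (by positivity)).2 ((le_div_iff₀' hpos).2 ?_))
      rw [Real.exp_neg, ← div_eq_mul_inv, lt_div_iff₀ (Real.exp_pos T)] at hy
      exact hy.le
  · have hpos := hq.pos hx
    exact hF.contDiffAt.comp x
      ((contDiffAt_const.div (hq_smooth x hx) hpos.ne').log (div_pos hR hpos).ne')

lemma fderiv_comp_log_div_self (hq : IsGauge q) (hR : 0 < R)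
    (hu : Differentiable ℝ fun x ↦ F (Real.log (R / q x))) {x : E} (hx : x ≠ 0) :
    fderiv ℝ (fun x ↦ F (Real.log (R / q x))) x x = -deriv F (Real.log (R / q x)) := by
  have hray : (fun s ↦ F (Real.log (R / q (logRay q R x s)))) = F := funext fun s ↦ by
    rw [hq.log_div_map_logRay hq hR hx, div_self (hq.pos hx).ne', Real.log_one, add_zero]
  have h := deriv_comp_logRay hu q R x (Real.log (R / q x))
  rw [hray, hq.logRay_log_div hR hx] at h
  rw [h, neg_neg]

lemma comp_log_div_ne_zero [Nontrivial E] (hq : IsGauge q) (hR : 0 < R) (hF : F ≠ 0) :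
    (fun x ↦ F (Real.log (R / q x))) ≠ 0 := by
  obtain ⟨s, hs⟩ := Function.ne_iff.1 hF
  obtain ⟨ω, hω⟩ := exists_ne (0 : E)
  refine Function.ne_iff.2 ⟨logRay q R ω s, ?_⟩
  rwa [hq.log_div_map_logRay hq hR hω, div_self (hq.pos hω).ne', Real.log_one, add_zero]

variable [MeasurableSpace E] [BorelSpace E] [FiniteDimensional ℝ E] [Nontrivial E] {μ : Measure E}
  [μ.IsAddHaarMeasure]

lemma integral_abs_fderiv_comp_log_div_pow (hp : IsGauge p) (hq : IsGauge q) (hR : 0 < R)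
    (hu : Differentiable ℝ fun x ↦ F (Real.log (R / q x))) (m : ℕ) :
    ∫ x, |fderiv ℝ (fun x ↦ F (Real.log (R / q x))) x x| ^ m ∂gaugeMeasure μ p =
      (gaugeSphereMeasure μ p).real univ * ∫ s, |deriv F s| ^ m := by
  rw [← hp.integral_gaugeMeasure_comp_log hq hR (k := fun s ↦ |deriv F s| ^ m)
    ((measurable_deriv F).abs.pow_const m) fun s ↦ by positivity]
  refine integral_congr_ae ?_
  filter_upwards [withDensity_absolutelyContinuous μ _ (Measure.ae_ne μ (0 : E))] with x hx
  rw [hq.fderiv_comp_log_div_self hR hu hx, abs_neg]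

lemma le_integral_hardyTerm_comp_log_div_pow (hp : IsGauge p) (hq : IsGauge q)
    (hqp : ∀ x, q x ≤ p x) (hR : 0 < R) (hR₁ : R₁ < R) (hF : Measurable F)
    (hS : ∀ s ≤ 0, F s = 0)
    (h0 : ∀ x, R₁ ≤ p x → F (Real.log (R / q x)) = 0)
    (hint : Integrable (fun x ↦ hardyTerm n p R (fun x ↦ F (Real.log (R / q x))) x ^ (n + 1))
      (gaugeMeasure μ p)) :
    (gaugeSphereMeasure μ p).real univ * ∫ s, (n / (n + 1) * |F s| / s) ^ (n + 1) ≤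
      ∫ x, hardyTerm n p R (fun x ↦ F (Real.log (R / q x))) x ^ (n + 1) ∂gaugeMeasure μ p := by
  have hnonneg (s : ℝ) : 0 ≤ n / (n + 1) * |F s| / s := by
    rcases le_total s 0 with hs | hs
    · simp [hS s hs]
    · positivity
  rw [← hp.integral_gaugeMeasure_comp_log hq hR (k := fun s ↦ (n / (n + 1) * |F s| / s) ^ (n + 1))
    (by fun_prop) fun s ↦ pow_nonneg (hnonneg s) _]
  refine integral_mono_of_nonneg (Eventually.of_forall fun x ↦ pow_nonneg (hnonneg _) _) hint
    (Eventually.of_forall fun x ↦ pow_le_pow_left₀ (hnonneg _) ?_ _)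
  rcases le_or_gt R₁ (p x) with hpx | hpx
  · simp [hardyTerm, h0 x hpx]
  rcases eq_or_ne x 0 with rfl | hx
  · simp [hardyTerm, hq.map_zero, hp.map_zero]
  have := hp.pos hx
  have := hq.pos hx
  have hlog : 0 < Real.log (R / p x) :=
    Real.log_pos ((one_lt_div (by positivity)).2 (hpx.trans hR₁))
  simp only [hardyTerm]
  gcongr
  exact hqp x

end IsGauge

end Radial

/-! ### The best constant -/

section BestConstant

variable {E : Type*} [NormedAddCommGroup E] [NormedSpace ℝ E] [MeasurableSpace E]

/-- The quotient of the critical Hardy inequality on `Ω`, with the gauge `p` in the role of the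
polar norm and the Fréchet derivative in that of the gradient. -/
def criticalHardyQuotient (μ : Measure E) (p : E → ℝ) (Ω : Set E) (u : E → ℝ) : ℝ :=
  (∫ x in Ω, |fderiv ℝ u x ((p x)⁻¹ • x)| ^ Module.finrank ℝ E ∂μ) /
    ∫ x in Ω, |u x| ^ Module.finrank ℝ E /
      (p x ^ Module.finrank ℝ E * Real.log (sSup (p '' Ω) / p x) ^ Module.finrank ℝ E) ∂μ

variable [BorelSpace E] {μ : Measure E} {p : E → ℝ} {Ω : Set E} {u : E → ℝ} {n : ℕ}

namespace IsGauge

lemma criticalHardyQuotient_eq (hp : IsGauge p) (hn : n ≠ 0) (hN : Module.finrank ℝ E = n + 1)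
    (huΩ : tsupport u ⊆ Ω) :
    criticalHardyQuotient μ p Ω u = (n / (n + 1)) ^ (n + 1) *
      ((∫ x, |fderiv ℝ u x x| ^ (n + 1) ∂gaugeMeasure μ p) /
        ∫ x, hardyTerm n p (sSup (p '' Ω)) u x ^ (n + 1) ∂gaugeMeasure μ p) := by
  have hnum : ∫ x in Ω, |fderiv ℝ u x ((p x)⁻¹ • x)| ^ (n + 1) ∂μ =
      ∫ x, |fderiv ℝ u x x| ^ (n + 1) ∂gaugeMeasure μ p := by
    rw [hp.integral_gaugeMeasure, hN, setIntegral_eq_integral_of_forall_compl_eq_zero fun x hx ↦ ?_]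
    · refine integral_congr_ae (Eventually.of_forall fun x ↦ ?_)
      simp only [map_smul, smul_eq_mul, abs_mul, abs_inv, abs_of_nonneg (hp.nonneg x), mul_pow,
        inv_pow]
    · simp [fderiv_of_notMem_tsupport ℝ fun h ↦ hx (huΩ h)]
  have hden : ∫ x, hardyTerm n p (sSup (p '' Ω)) u x ^ (n + 1) ∂gaugeMeasure μ p =
      (n / (n + 1)) ^ (n + 1) * ∫ x in Ω, |u x| ^ (n + 1) /
        (p x ^ (n + 1) * Real.log (sSup (p '' Ω) / p x) ^ (n + 1)) ∂μ := by
    rw [hp.integral_gaugeMeasure, hN, setIntegral_eq_integral_of_forall_compl_eq_zero fun x hx ↦ ?_,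
      ← integral_const_mul]
    · refine integral_congr_ae (Eventually.of_forall fun x ↦ ?_)
      simp only [hardyTerm, mul_pow, div_eq_mul_inv, mul_inv]
      ring
    · simp [image_eq_zero_of_notMem_tsupport fun h ↦ hx (huΩ h)]
  rw [criticalHardyQuotient, hN, hnum, hden]
  field_simp

variable [FiniteDimensional ℝ E] [μ.IsAddHaarMeasure]

theorem lt_criticalHardyQuotient (hp : IsGauge p) (hn : n ≠ 0) (hN : Module.finrank ℝ E = n + 1)
    (hΩ : IsOpen Ω) (hbdd : Bornology.IsBounded Ω) (hu : ContDiff ℝ 1 u)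
    (huc : HasCompactSupport u) (huΩ : tsupport u ⊆ Ω) (hu0 : u ≠ 0) :
    (n / (n + 1) : ℝ) ^ (n + 1) < criticalHardyQuotient μ p Ω u := by
  have := Module.nontrivial_of_finrank_pos (R := ℝ) (M := E) (by lia)
  obtain ⟨R₁, hR₁, hR, h0⟩ := hp.exists_lt_sSup_image_forall_eq_zero hΩ hbdd huc huΩ hu0
  rw [hp.criticalHardyQuotient_eq hn hN huΩ]
  refine lt_mul_of_one_lt_right (by positivity) ((one_lt_div ?_).2 ?_)
  · exact hp.integral_hardyTerm_pow_pos hn hN hR₁ hR hu h0 hu0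
  · exact hp.integral_hardyTerm_pow_lt hn hN hR₁ hR hu h0 hu0

lemma criticalHardyQuotient_comp_log_div_lt (hp : IsGauge p) {q : E → ℝ} (hq : IsGauge q)
    (hqp : ∀ x, q x ≤ p x) (hn : n ≠ 0) (hN : Module.finrank ℝ E = n + 1) (hΩ : IsOpen Ω)
    (hbdd : Bornology.IsBounded Ω) {F : ℝ → ℝ} (hF : Measurable F) (hF0 : ∀ s ≤ 0, F s = 0)
    (hu_eq : u = fun x ↦ F (Real.log (sSup (p '' Ω) / q x))) (hu : ContDiff ℝ 1 u)
    (huc : HasCompactSupport u) (huΩ : tsupport u ⊆ Ω) (hu0 : u ≠ 0) {c : ℝ}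
    (hc : 0 ≤ c) (hlt : ∫ s, |deriv F s| ^ (n + 1) < c * ∫ s, (|F s| / s) ^ (n + 1)) :
    criticalHardyQuotient μ p Ω u < c := by
  have := Module.nontrivial_of_finrank_pos (R := ℝ) (M := E) (by lia)
  obtain ⟨R₁, hR₁, hR, h0⟩ := hp.exists_lt_sSup_image_forall_eq_zero hΩ hbdd huc huΩ hu0
  have hden_pos := hp.integral_hardyTerm_pow_pos (μ := μ) hn hN hR₁ hR hu h0 hu0
  have hnum_pos := hden_pos.trans (hp.integral_hardyTerm_pow_lt hn hN hR₁ hR hu h0 hu0)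
  have hint := hp.integrable_hardyTerm_pow (μ := μ) hn hN hR₁ hR hu h0
  rw [hp.criticalHardyQuotient_eq hn hN huΩ, ← mul_div_assoc, div_lt_iff₀ hden_pos]
  subst hu_eq
  have hden := hp.le_integral_hardyTerm_comp_log_div_pow hq hqp (hR₁.trans hR) hR hF hF0 h0 hint
  rw [hp.integral_abs_fderiv_comp_log_div_pow hq (hR₁.trans hR)
    (hu.differentiable one_ne_zero)] at hnum_pos ⊢
  have hK := pos_of_mul_pos_left hnum_pos (integral_nonneg fun s ↦ by positivity)
  calc (n / (n + 1)) ^ (n + 1) *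
        ((gaugeSphereMeasure μ p).real univ * ∫ s, |deriv F s| ^ (n + 1))
      < (n / (n + 1)) ^ (n + 1) *
        ((gaugeSphereMeasure μ p).real univ * (c * ∫ s, (|F s| / s) ^ (n + 1))) := by gcongr
    _ = c * ((gaugeSphereMeasure μ p).real univ *
        ∫ s, (n / (n + 1) * |F s| / s) ^ (n + 1)) := by
      simp only [mul_div_assoc, mul_pow _ (|F _| / _), integral_const_mul]
      ring
    _ ≤ _ := by gcongr

theorem exists_criticalHardyQuotient_lt (hp : IsGauge p) (hn : n ≠ 0)
    (hN : Module.finrank ℝ E = n + 1) (hΩ : IsOpen Ω) (hbdd : Bornology.IsBounded Ω)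
    (h0Ω : 0 ∈ Ω) {c : ℝ} (hc : (n / (n + 1) : ℝ) ^ (n + 1) < c) :
    ∃ u : E → ℝ, (ContDiff ℝ (⊤ : ℕ∞) u ∧ HasCompactSupport u ∧ tsupport u ⊆ Ω) ∧ u ≠ 0 ∧
      criticalHardyQuotient μ p Ω u < c := by
  have := Module.nontrivial_of_finrank_pos (R := ℝ) (M := E) (by lia)
  set R := sSup (p '' Ω)
  have hR : 0 < R := hp.map_zero ▸ hp.lt_sSup_image hΩ hbdd h0Ω
  obtain ⟨q, hq, hq_smooth, hqp⟩ := hp.exists_smooth_le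
  obtain ⟨r, hr, hrΩ⟩ := hq.exists_setOf_le_subset (hΩ.mem_nhds h0Ω)
  obtain ⟨F, T, hF, hFS, hFT, hlt⟩ :=
    exists_integral_abs_deriv_pow_lt n hc (max 0 (Real.log (R / r)))
  have hF_nonpos (s : ℝ) (hs : s ≤ 0) : F s = 0 := hFS s (le_max_of_le_left hs)
  let u : E → ℝ := fun x ↦ F (Real.log (R / q x))
  have hu : ContDiff ℝ (⊤ : ℕ∞) u :=
    hq.contDiff_comp_log_div hq_smooth hR hF (hF_nonpos 0 le_rfl) hFT
  have hur (x : E) (hx : r ≤ q x) : u x = 0 := by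
    have := hr.trans_le hx
    exact hFS _ ((Real.log_le_log (by positivity) (by gcongr)).trans (le_max_right _ _))
  have huc : HasCompactSupport u := hq.hasCompactSupport hur
  have huΩ : tsupport u ⊆ Ω := by
    refine (closure_minimal (t := {x | q x ≤ r}) (fun x hx ↦ ?_)
      (isClosed_le hq.continuous continuous_const)).trans hrΩ
    exact not_lt.1 fun hrx ↦ hx (hur x hrx.le)
  have hu0 : u ≠ 0 := hq.comp_log_div_ne_zero hR fun hF0 ↦ by simp [hF0] at hlt
  exact ⟨u, ⟨hu, huc, huΩ⟩, hu0, hp.criticalHardyQuotient_comp_log_div_lt hq hqp hn hN hΩ hbdd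
    hF.continuous.measurable hF_nonpos rfl (hu.of_le (by norm_num)) huc huΩ hu0
    ((by positivity : (0 : ℝ) ≤ (n / (n + 1)) ^ (n + 1)).trans hc.le) hlt⟩

end IsGauge

theorem finsler_hardy_critical_best_constant_general [FiniteDimensional ℝ E] [μ.IsAddHaarMeasure]
    (hE : 2 ≤ Module.finrank ℝ E) (hp : IsGauge p) (hΩ : IsOpen Ω) (hbdd : Bornology.IsBounded Ω)
    (h0Ω : 0 ∈ Ω) :
    sInf {r : ℝ | ∃ u : E → ℝ, (ContDiff ℝ (⊤ : ℕ∞) u ∧ HasCompactSupport u ∧ tsupport u ⊆ Ω) ∧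
        u ≠ 0 ∧ r = criticalHardyQuotient μ p Ω u} =
      (((Module.finrank ℝ E : ℝ) - 1) / Module.finrank ℝ E) ^ Module.finrank ℝ E ∧
    ∀ u : E → ℝ, (ContDiff ℝ (⊤ : ℕ∞) u ∧ HasCompactSupport u ∧ tsupport u ⊆ Ω) → u ≠ 0 →
      (((Module.finrank ℝ E : ℝ) - 1) / Module.finrank ℝ E) ^ Module.finrank ℝ E <
        criticalHardyQuotient μ p Ω u := by
  obtain ⟨n, hN⟩ := Nat.exists_eq_add_one.2 (zero_lt_two.trans_le hE)
  have hn : n ≠ 0 := by lia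
  simp only [hN, Nat.cast_add_one, add_sub_cancel_right]
  have hlower (u : E → ℝ)
      (hu : ContDiff ℝ (⊤ : ℕ∞) u ∧ HasCompactSupport u ∧ tsupport u ⊆ Ω) (hu0 : u ≠ 0) :
      (n / (n + 1) : ℝ) ^ (n + 1) < criticalHardyQuotient μ p Ω u :=
    hp.lt_criticalHardyQuotient hn hN hΩ hbdd (hu.1.of_le (by norm_num)) hu.2.1 hu.2.2 hu0
  refine ⟨csInf_eq_of_forall_ge_of_forall_gt_exists_lt ?_ ?_ fun c hc ↦ ?_, hlower⟩
  · obtain ⟨u, hu, hu0, -⟩ :=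
      hp.exists_criticalHardyQuotient_lt (μ := μ) hn hN hΩ hbdd h0Ω (lt_add_one _)
    exact ⟨_, u, hu, hu0, rfl⟩
  · rintro _ ⟨u, hu, hu0, rfl⟩
    exact (hlower u hu hu0).le
  · obtain ⟨u, hu, hu0, hlt⟩ :=
      hp.exists_criticalHardyQuotient_lt (μ := μ) hn hN hΩ hbdd h0Ω hc
    exact ⟨_, ⟨u, hu, hu0, rfl⟩, hlt⟩

end BestConstant

/-- The best constant in the anisotropic critical Hardy inequality on a bounded
domain containing the origin is ((N-1)/N)^N and it is not attained. -/
theorem finsler_hardy_critical_best_constant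
    (N : ℕ) (hN : 2 ≤ N) (H : Euc N → ℝ) (hH : IsFinslerNorm H)
    (Ω : Set (Euc N)) (hΩopen : IsOpen Ω) (hΩconn : IsConnected Ω)
    (hΩbdd : Bornology.IsBounded Ω) (h0 : 0 ∈ Ω) :
    sInf {r : ℝ | ∃ u : Euc N → ℝ, IsTestFun Ω u ∧ u ≠ 0 ∧
        r = (∫ x in Ω, |⟪(polarNorm H x)⁻¹ • x, gradient u x⟫| ^ N) /
            ∫ x in Ω, |u x| ^ N /
              (polarNorm H x ^ N *
                Real.log (sSup (polarNorm H '' Ω) / polarNorm H x) ^ N)}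
      = (((N : ℝ) - 1) / (N : ℝ)) ^ N ∧
    (∀ u : Euc N → ℝ, IsTestFun Ω u → u ≠ 0 →
      (((N : ℝ) - 1) / (N : ℝ)) ^ N <
        (∫ x in Ω, |⟪(polarNorm H x)⁻¹ • x, gradient u x⟫| ^ N) /
          ∫ x in Ω, |u x| ^ N /
            (polarNorm H x ^ N *
              Real.log (sSup (polarNorm H '' Ω) / polarNorm H x) ^ N)) := by
  obtain ⟨a, b, ha, -, hab⟩ := hH.bounds
  simpa only [IsTestFun, inner_gradient_right, conj_trivial, criticalHardyQuotient,
    finrank_euclideanSpace_fin] using finsler_hardy_critical_best_constant_general (μ := volume)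
      (by rwa [finrank_euclideanSpace_fin])
      (isGauge_polarNorm ⟨a, ha, fun ξ ↦ (hab ξ).1⟩) hΩopen hΩbdd h0
end
end
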